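/- arXiv:1701.00787 — 4 statements merged into one kernel-verified Lean document; each statement's English description precedes it below -/
import Mathlib

section
/- Let α, β be real numbers with α > -1/2 and β ≥ 0, let δ > 0 be real, let n ∈ ℕ (n ≥ 0), and let t ∈ (0, π]. If F_n^{(α,β),δ}(t) ≥ 0 and F_{n+1}^{(α,β),δ}(t) ≥ 0, then F_n^{(α,β+1),δ}(t) ≥ 0. Moreover, if F_n^{(α,β),δ}(t) > 0 and F_{n+1}^{(α,β),δ}(t) > 0, then F_n^{(α,β+1),δ}(t) > 0. -/
open MeasureTheory Real Set

/-- Generalized binomial coefficient `C(u, v) = Γ(u+1) / (Γ(v+1) Γ(u-v+1))`. -/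
noncomputable def genBinom (u v : ℝ) : ℝ :=
  Real.Gamma (u + 1) / (Real.Gamma (v + 1) * Real.Gamma (u - v + 1))

/-- Jacobi polynomial `P_n^{(a,b)}(x)`. -/
noncomputable def jacobiP (n : ℕ) (a b x : ℝ) : ℝ :=
  ∑ k ∈ Finset.range (n + 1),
    genBinom ((n : ℝ) + a) ((n : ℝ) - (k : ℝ)) * genBinom ((n : ℝ) + b) (k : ℝ) *
      ((x - 1) / 2) ^ k * ((x + 1) / 2) ^ (n - k)

/-- `F_n^{(α,β),δ}(t)`. -/
noncomputable def FJ (n : ℕ) (α β δ t : ℝ) : ℝ :=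
  ∫ θ in (0:ℝ)..t, (t - θ) ^ δ * jacobiP n (α - 1/2) (β - 1/2) (Real.cos θ) *
    (Real.sin (θ / 2)) ^ (2 * α) * (Real.cos (θ / 2)) ^ (2 * β)

lemma sum_split_aux (n : ℕ) (G f g : ℕ → ℝ) (h0 : G 0 = f 0) (hl : G (n + 1) = g n)
    (hm : ∀ k, k < n → G (k + 1) = f (k + 1) + g k) :
    ∑ k ∈ Finset.range (n + 2), G k =
      ∑ k ∈ Finset.range (n + 1), f k + ∑ k ∈ Finset.range (n + 1), g k := by
  rw [Finset.sum_range_succ' G, Finset.sum_range_succ (fun k => G (k + 1)),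
    Finset.sum_range_succ' f, Finset.sum_range_succ g]
  have : ∑ k ∈ Finset.range n, G (k + 1) =
      ∑ k ∈ Finset.range n, f (k + 1) + ∑ k ∈ Finset.range n, g k := by
    rw [← Finset.sum_add_distrib]
    exact Finset.sum_congr rfl fun k hk => hm k (Finset.mem_range.mp hk)
  rw [this, h0, hl]; ring

lemma genBinom_eq (u v p q r : ℝ) (hp : u + 1 = p) (hq : v + 1 = q) (hr : u - v + 1 = r) :
    genBinom u v = Real.Gamma p / (Real.Gamma q * Real.Gamma r) := by
  subst hp hq hr; rfl

lemma coef_zero (a b : ℝ) (ha : -1 < a) (hb : -1 < b) (n : ℕ) :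
    ((n : ℝ) + 1) * (genBinom (n + 1 + a) (n + 1) * genBinom (n + 1 + b) 0) =
      (2 * n + a + b + 2) * (genBinom (n + a) n * genBinom (n + (b + 1)) 0)
      - (n + b + 1) * (genBinom (n + a) n * genBinom (n + b) 0) := by
  have hn : (0 : ℝ) ≤ n := n.cast_nonneg
  rw [genBinom_eq (n + 1 + a) (n + 1) ((n + a + 1) + 1) ((n + 1) + 1) (a + 1) (by ring) (by ring) (by ring),
    genBinom_eq (n + 1 + b) 0 (n + b + 1 + 1) 1 (n + b + 1 + 1) (by ring) (by ring) (by ring),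
    genBinom_eq (n + (b + 1)) 0 (n + b + 1 + 1) 1 (n + b + 1 + 1) (by ring) (by ring) (by ring),
    genBinom_eq (n + b) 0 (n + b + 1) 1 (n + b + 1) (by ring) (by ring) (by ring),
    genBinom_eq (n + a) n (n + a + 1) (n + 1) (a + 1) (by ring) (by ring) (by ring),
    Real.Gamma_add_one (s := n + a + 1) (by linarith), Real.Gamma_add_one (s := n + 1) (by linarith),
    Real.Gamma_add_one (s := n + b + 1) (by linarith), Real.Gamma_one]
  have h1 := (Real.Gamma_pos_of_pos (s := n + b + 1) (by linarith)).ne'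
  have h2 := (Real.Gamma_pos_of_pos (s := n + 1) (by linarith)).ne'
  have h3 := (Real.Gamma_pos_of_pos (s := a + 1) (by linarith)).ne'
  have h4 : (n : ℝ) + b + 1 ≠ 0 := by linarith
  have h5 : (n : ℝ) + 1 ≠ 0 := by linarith
  field_simp
  ring

lemma coef_last (a b : ℝ) (ha : -1 < a) (hb : -1 < b) (n : ℕ) :
    ((n : ℝ) + 1) * (genBinom (n + 1 + a) 0 * genBinom (n + 1 + b) (n + 1)) =
      (n + b + 1) * (genBinom (n + a) 0 * genBinom (n + b) n) := by
  have hn : (0 : ℝ) ≤ n := n.cast_nonneg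
  rw [genBinom_eq (n + 1 + b) (n + 1) ((n + b + 1) + 1) ((n + 1) + 1) (b + 1) (by ring) (by ring) (by ring),
    genBinom_eq (n + 1 + a) 0 (n + a + 1 + 1) 1 (n + a + 1 + 1) (by ring) (by ring) (by ring),
    genBinom_eq (n + a) 0 (n + a + 1) 1 (n + a + 1) (by ring) (by ring) (by ring),
    genBinom_eq (n + b) n (n + b + 1) (n + 1) (b + 1) (by ring) (by ring) (by ring),
    Real.Gamma_add_one (s := n + a + 1) (by linarith), Real.Gamma_add_one (s := n + 1) (by linarith),
    Real.Gamma_add_one (s := n + b + 1) (by linarith), Real.Gamma_one]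
  have h1 := (Real.Gamma_pos_of_pos (s := n + a + 1) (by linarith)).ne'
  have h2 := (Real.Gamma_pos_of_pos (s := n + 1) (by linarith)).ne'
  have h3 := (Real.Gamma_pos_of_pos (s := b + 1) (by linarith)).ne'
  have h4 : (n : ℝ) + a + 1 ≠ 0 := by linarith
  have h5 : (n : ℝ) + 1 ≠ 0 := by linarith
  field_simp

lemma coef_mid (a b : ℝ) (ha : -1 < a) (hb : -1 < b) (n k m : ℝ) (hk : 0 ≤ k) (hm : 0 ≤ m)
    (hn : n = k + 1 + m) :
    (n + 1) * (genBinom (n + 1 + a) (n + 1 - (k + 1)) * genBinom (n + 1 + b) (k + 1)) =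
      (2 * n + a + b + 2) * (genBinom (n + a) (n - (k + 1)) * genBinom (n + (b + 1)) (k + 1))
      - (n + b + 1) * (genBinom (n + a) (n - (k + 1)) * genBinom (n + b) (k + 1))
      + (n + b + 1) * (genBinom (n + a) (n - k) * genBinom (n + b) k) := by
  subst hn
  rw [genBinom_eq (k + 1 + m + 1 + a) (k + 1 + m + 1 - (k + 1)) ((k + m + a + 2) + 1) ((m + 1) + 1) ((a + k + 1) + 1) (by ring) (by ring) (by ring),
    genBinom_eq (k + 1 + m + a) (k + 1 + m - (k + 1)) (k + m + a + 2) (m + 1) ((a + k + 1) + 1) (by ring) (by ring) (by ring),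
    genBinom_eq (k + 1 + m + a) (k + 1 + m - k) (k + m + a + 2) ((m + 1) + 1) (a + k + 1) (by ring) (by ring) (by ring),
    genBinom_eq (k + 1 + m + 1 + b) (k + 1) ((k + m + b + 2) + 1) ((k + 1) + 1) ((m + b + 1) + 1) (by ring) (by ring) (by ring),
    genBinom_eq (k + 1 + m + (b + 1)) (k + 1) ((k + m + b + 2) + 1) ((k + 1) + 1) ((m + b + 1) + 1) (by ring) (by ring) (by ring),
    genBinom_eq (k + 1 + m + b) (k + 1) (k + m + b + 2) ((k + 1) + 1) (m + b + 1) (by ring) (by ring) (by ring),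
    genBinom_eq (k + 1 + m + b) k (k + m + b + 2) (k + 1) ((m + b + 1) + 1) (by ring) (by ring) (by ring),
    Real.Gamma_add_one (s := k + m + a + 2) (by linarith), Real.Gamma_add_one (s := m + 1) (by linarith),
    Real.Gamma_add_one (s := a + k + 1) (by linarith), Real.Gamma_add_one (s := k + 1) (by linarith),
    Real.Gamma_add_one (s := k + m + b + 2) (by linarith), Real.Gamma_add_one (s := m + b + 1) (by linarith)]
  have h1 := (Real.Gamma_pos_of_pos (s := m + 1) (by linarith)).ne'
  have h2 := (Real.Gamma_pos_of_pos (s := k + 1) (by linarith)).ne'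
  have h3 := (Real.Gamma_pos_of_pos (s := a + k + 1) (by linarith)).ne'
  have h4 := (Real.Gamma_pos_of_pos (s := m + b + 1) (by linarith)).ne'
  have h5 : m + 1 ≠ 0 := by linarith
  have h6 : k + 1 ≠ 0 := by linarith
  have h7 : a + k + 1 ≠ 0 := by linarith
  have h8 : m + b + 1 ≠ 0 := by linarith
  field_simp
  ring

lemma jacobi_rec (a b : ℝ) (ha : -1 < a) (hb : -1 < b) (n : ℕ) (x : ℝ) :
    (2 * n + a + b + 2) * ((x + 1) / 2) * jacobiP n a (b + 1) x =
      (n + 1) * jacobiP (n + 1) a b x + (n + b + 1) * jacobiP n a b x := by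
  obtain ⟨u, hu⟩ : ∃ u, u = (x - 1) / 2 := ⟨_, rfl⟩
  obtain ⟨v, hv⟩ : ∃ v, v = (x + 1) / 2 := ⟨_, rfl⟩
  have huv : v - u = 1 := by rw [hu, hv]; ring
  unfold jacobiP
  rw [← hu, ← hv]
  have key := sum_split_aux n
    (fun k => (n + 1) * (genBinom (((n + 1 : ℕ) : ℝ) + a) (((n + 1 : ℕ) : ℝ) - (k : ℝ)) *
      genBinom (((n + 1 : ℕ) : ℝ) + b) (k : ℝ) * u ^ k * v ^ (n + 1 - k)))
    (fun k => (2 * n + a + b + 2) * v * (genBinom ((n : ℝ) + a) ((n : ℝ) - (k : ℝ)) *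
      genBinom ((n : ℝ) + (b + 1)) (k : ℝ) * u ^ k * v ^ (n - k))
      - (n + b + 1) * v * (genBinom ((n : ℝ) + a) ((n : ℝ) - (k : ℝ)) *
      genBinom ((n : ℝ) + b) (k : ℝ) * u ^ k * v ^ (n - k)))
    (fun k => (n + b + 1) * u * (genBinom ((n : ℝ) + a) ((n : ℝ) - (k : ℝ)) *
      genBinom ((n : ℝ) + b) (k : ℝ) * u ^ k * v ^ (n - k))) ?_ ?_ ?_
  · rw [Finset.sum_sub_distrib] at key
    simp only [← Finset.mul_sum] at key
    rw [key]
    linear_combination (-(n + b + 1) * (∑ k ∈ Finset.range (n + 1),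
      genBinom ((n : ℝ) + a) ((n : ℝ) - (k : ℝ)) * genBinom ((n : ℝ) + b) (k : ℝ) *
      u ^ k * v ^ (n - k))) * (1 - huv)
  · have h := coef_zero a b ha hb n
    simp only [Nat.cast_zero, sub_zero, pow_zero, Nat.cast_add, Nat.cast_one, Nat.sub_zero, pow_succ]
    linear_combination (v ^ n * v) * h
  · have h := coef_last a b ha hb n
    simp only [sub_self, Nat.cast_add, Nat.cast_one, Nat.sub_self, pow_succ, pow_zero]
    linear_combination (u ^ n * u) * h
  · intro k hk
    obtain ⟨m, rfl⟩ : ∃ m, n = k + 1 + m := ⟨n - (k + 1), by omega⟩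
    have h := coef_mid a b ha hb ((k + 1 + m : ℕ) : ℝ) k m k.cast_nonneg m.cast_nonneg (by push_cast; ring)
    have e1 : k + 1 + m + 1 - (k + 1) = m + 1 := by omega
    have e2 : k + 1 + m - (k + 1) = m := by omega
    have e3 : k + 1 + m - k = m + 1 := by omega
    simp only [e1, e2, e3, pow_succ]
    rw [Nat.cast_add_one (k + 1 + m), Nat.cast_add_one k]
    linear_combination (u ^ k * u * (v ^ m * v)) * h

lemma continuous_jacobiP (n : ℕ) (a b : ℝ) : Continuous (jacobiP n a b) := by
  unfold jacobiP; fun_prop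

lemma FJ_integrable (α β δ : ℝ) (hα : -1/2 < α) (hβ : 0 ≤ β) (hδ : 0 < δ) (n : ℕ) (t : ℝ)
    (ht : t ∈ Set.Ioc (0:ℝ) π) :
    IntervalIntegrable (fun θ => (t - θ) ^ δ * jacobiP n (α - 1/2) (β - 1/2) (Real.cos θ) *
    (Real.sin (θ / 2)) ^ (2 * α) * (Real.cos (θ / 2)) ^ (2 * β)) volume 0 t := by
  obtain ⟨ht0, htπ⟩ := ht
  have hu : Set.uIcc 0 t = Set.Icc 0 t := Set.uIcc_of_le ht0.le
  have hsinc : ∀ θ ∈ Set.Icc 0 t, 0 < Real.sinc (θ / 2) := by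
    intro θ hθ
    rcases eq_or_lt_of_le hθ.1 with h | h
    · rw [← h]; simp
    · rw [Real.sinc_of_ne_zero (by linarith)]
      exact div_pos (Real.sin_pos_of_pos_of_lt_pi (by linarith) (by linarith [hθ.2])) (by linarith)
  have h1 : IntervalIntegrable (fun θ : ℝ => θ ^ (2 * α)) volume 0 t :=
    intervalIntegral.intervalIntegrable_rpow' (by linarith)
  have hc : ContinuousOn (fun θ : ℝ => (t - θ) ^ δ * jacobiP n (α - 1/2) (β - 1/2) (Real.cos θ) *
      ((1/2) * Real.sinc (θ / 2)) ^ (2 * α) * (Real.cos (θ / 2)) ^ (2 * β)) (Set.uIcc 0 t) := by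
    rw [hu]
    have c1 : Continuous fun θ : ℝ => (t - θ) ^ δ :=
      (continuous_const.sub continuous_id).rpow_const fun _ => Or.inr hδ.le
    have c2 : Continuous fun θ : ℝ => jacobiP n (α - 1/2) (β - 1/2) (Real.cos θ) :=
      (continuous_jacobiP _ _ _).comp Real.continuous_cos
    have c3 : Continuous fun θ : ℝ => (Real.cos (θ / 2)) ^ (2 * β) :=
      (Real.continuous_cos.comp (continuous_id.div_const 2)).rpow_const
        fun _ => Or.inr (by linarith)
    have c4 : Continuous fun θ : ℝ => (1/2) * Real.sinc (θ / 2) :=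
      continuous_const.mul (Real.continuous_sinc.comp (continuous_id.div_const 2))
    exact ((c1.mul c2).continuousOn.mul (c4.continuousOn.rpow_const fun θ hθ =>
      Or.inl (by have := hsinc θ hθ; positivity))).mul c3.continuousOn
  refine (h1.mul_continuousOn hc).congr ?_
  intro θ hθ
  rw [Set.uIoc_of_le ht0.le] at hθ
  have hs : Real.sin (θ / 2) = θ * ((1/2) * Real.sinc (θ / 2)) := by
    rw [Real.sinc_of_ne_zero (by linarith [hθ.1])]
    have := hθ.1.ne'
    field_simp
  have hp := hsinc θ ⟨hθ.1.le, hθ.2⟩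
  simp only
  rw [hs, Real.mul_rpow hθ.1.le (by positivity)]
  ring

lemma FJ_rec (α β : ℝ) (hα : -1/2 < α) (hβ : 0 ≤ β) (δ : ℝ)
    (hδ : 0 < δ) (n : ℕ) (t : ℝ) (ht : t ∈ Set.Ioc (0:ℝ) π) :
    (2 * n + α + β + 1) * FJ n α (β + 1) δ t =
      (n + 1) * FJ (n + 1) α β δ t + (n + β + 1/2) * FJ n α β δ t := by
  unfold FJ
  rw [← intervalIntegral.integral_const_mul, ← intervalIntegral.integral_const_mul,
    ← intervalIntegral.integral_const_mul, ← intervalIntegral.integral_add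
    ((FJ_integrable α β δ hα hβ hδ (n + 1) t ht).const_mul _)
    ((FJ_integrable α β δ hα hβ hδ n t ht).const_mul _)]
  refine intervalIntegral.integral_congr ?_
  intro θ hθ
  rw [Set.uIcc_of_le ht.1.le] at hθ
  have hcos : 0 ≤ Real.cos (θ / 2) :=
    Real.cos_nonneg_of_mem_Icc ⟨by linarith [hθ.1, Real.pi_pos], by linarith [hθ.2, ht.2]⟩
  have hpow : Real.cos (θ / 2) ^ (2 * (β + 1)) =
      Real.cos (θ / 2) ^ (2 * β) * ((Real.cos θ + 1) / 2) := by
    rw [show 2 * (β + 1) = 2 * β + 2 by ring, Real.rpow_add_of_nonneg hcos (by linarith) (by norm_num),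
      Real.rpow_two, Real.cos_sq]
    congr 1
    rw [show 2 * (θ / 2) = θ by ring]; ring
  have h := jacobi_rec (α - 1/2) (β - 1/2) (by linarith) (by linarith) n (Real.cos θ)
  rw [show β - 1/2 + 1 = β + 1 - 1/2 by ring] at h
  simp only
  rw [hpow]
  linear_combination ((t - θ) ^ δ * Real.sin (θ / 2) ^ (2 * α) * Real.cos (θ / 2) ^ (2 * β)) * h

theorem FJ_beta_step_nonneg (α β : ℝ) (hα : -1/2 < α) (hβ : 0 ≤ β) (δ : ℝ)
    (hδ : 0 < δ) (n : ℕ) (t : ℝ) (ht : t ∈ Set.Ioc (0:ℝ) π) :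
    ((0 ≤ FJ n α β δ t → 0 ≤ FJ (n + 1) α β δ t → 0 ≤ FJ n α (β + 1) δ t) ∧
     (0 < FJ n α β δ t → 0 < FJ (n + 1) α β δ t → 0 < FJ n α (β + 1) δ t)) := by
  have h := FJ_rec α β hα hβ δ hδ n t ht
  have hn : (0 : ℝ) ≤ n := n.cast_nonneg
  have hpos : 0 < 2 * (n : ℝ) + α + β + 1 := by linarith
  constructor
  · intro h1 h2
    exact nonneg_of_mul_nonneg_right (by rw [h]; positivity) hpos
  · intro h1 h2
    exact (mul_pos_iff_of_pos_left hpos).mp (by rw [h]; positivity)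
end

section
/- Let α, β be real numbers with α > -1/2 and β > -1/2, let δ > 0 be real, let n ∈ ℕ (n ≥ 0), and let t ∈ (0, π]. Then F_n^{(α,β+1),δ}(t) = A_n^{α,β} F_n^{(α,β),δ}(t) + B_n^{α,β} F_{n+1}^{(α,β),δ}(t), where A_n^{α,β} = (n + β + 1/2)/(2n + α + β + 1) and B_n^{α,β} = (n + 1)/(2n + α + β + 1). -/
open MeasureTheory Real Set

lemma gb_coef_mid (a b : ℝ) (ha : -1 < a) (hb : -1 < b) (j m : ℕ) (n : ℝ) (hn : n = j + 1 + m) (k : ℝ) (hk : k = j + 1) :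
    (2 * n + a + b + 2) * (genBinom (n + a) (n - k) * genBinom (n + (b + 1)) k) =
      (n + b + 1) * (genBinom (n + a) (n - k) * genBinom (n + b) k
        - genBinom (n + a) (n - j) * genBinom (n + b) j)
      + (n + 1) * (genBinom (n + 1 + a) (n + 1 - k) * genBinom (n + 1 + b) k) := by
  have hj : (0:ℝ) ≤ j := Nat.cast_nonneg j
  have hm : (0:ℝ) ≤ m := Nat.cast_nonneg m
  subst hn hk
  unfold genBinom
  have e1 : Real.Gamma ((j:ℝ) + 1 + 1) = (j + 1) * Real.Gamma (j + 1) :=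
    Real.Gamma_add_one (by positivity)
  have e2 : Real.Gamma ((m:ℝ) + 1 + 1) = (m + 1) * Real.Gamma (m + 1) :=
    Real.Gamma_add_one (by positivity)
  have e3 : Real.Gamma (a + j + 1 + 1) = (a + j + 1) * Real.Gamma (a + j + 1) :=
    Real.Gamma_add_one (by linarith)
  have e4 : Real.Gamma (b + m + 1 + 1) = (b + m + 1) * Real.Gamma (b + m + 1) :=
    Real.Gamma_add_one (by linarith)
  have e5 : Real.Gamma (j + 1 + m + a + 1 + 1) = (j + 1 + m + a + 1) * Real.Gamma (j + 1 + m + a + 1) :=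
    Real.Gamma_add_one (by linarith)
  have e6 : Real.Gamma (j + 1 + m + b + 1 + 1) = (j + 1 + m + b + 1) * Real.Gamma (j + 1 + m + b + 1) :=
    Real.Gamma_add_one (by linarith)
  have p1 : 0 < Real.Gamma ((j:ℝ) + 1) := Real.Gamma_pos_of_pos (by linarith)
  have p2 : 0 < Real.Gamma ((m:ℝ) + 1) := Real.Gamma_pos_of_pos (by linarith)
  have p3 : 0 < Real.Gamma (a + j + 1) := Real.Gamma_pos_of_pos (by linarith)
  have p4 : 0 < Real.Gamma (b + m + 1) := Real.Gamma_pos_of_pos (by linarith)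
  rw [show (j:ℝ) + 1 + m - (j + 1) + 1 = m + 1 by ring,
    show (j:ℝ) + 1 + m + a - (j + 1 + m - (j + 1)) + 1 = a + j + 1 + 1 by ring,
    show (j:ℝ) + 1 + m + (b + 1) + 1 = j + 1 + m + b + 1 + 1 by ring,
    show (j:ℝ) + 1 + m + (b + 1) - (j + 1) + 1 = b + m + 1 + 1 by ring,
    show (j:ℝ) + 1 + m + b - (j + 1) + 1 = b + m + 1 by ring,
    show (j:ℝ) + 1 + m - j + 1 = m + 1 + 1 by ring,
    show (j:ℝ) + 1 + m + a - (j + 1 + m - j) + 1 = a + j + 1 by ring,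
    show (j:ℝ) + 1 + m + b - j + 1 = b + m + 1 + 1 by ring,
    show (j:ℝ) + 1 + m + 1 + a + 1 = j + 1 + m + a + 1 + 1 by ring,
    show (j:ℝ) + 1 + m + 1 - (j + 1) + 1 = m + 1 + 1 by ring,
    show (j:ℝ) + 1 + m + 1 + a - (j + 1 + m + 1 - (j + 1)) + 1 = a + j + 1 + 1 by ring,
    show (j:ℝ) + 1 + m + 1 + b + 1 = j + 1 + m + b + 1 + 1 by ring,
    show (j:ℝ) + 1 + m + 1 + b - (j + 1) + 1 = b + m + 1 + 1 by ring,
    e1, e2, e3, e4, e5, e6]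
  have q1 : (j:ℝ) + 1 ≠ 0 := by positivity
  have q2 : (m:ℝ) + 1 ≠ 0 := by positivity
  have q3 : a + j + 1 ≠ 0 := by linarith
  have q4 : b + m + 1 ≠ 0 := by linarith
  generalize Real.Gamma ((j:ℝ) + 1) = G1 at *
  generalize Real.Gamma ((m:ℝ) + 1) = G2 at *
  generalize Real.Gamma (a + j + 1) = G3 at *
  generalize Real.Gamma (b + m + 1) = G4 at *
  generalize Real.Gamma (j + 1 + m + a + 1) = G5 at *
  generalize Real.Gamma (j + 1 + m + b + 1) = G6 at *
  field_simp
  ring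

lemma gb_zero (u : ℝ) (hu : -1 < u) : genBinom u 0 = 1 := by
  have : 0 < Real.Gamma (u + 1) := Real.Gamma_pos_of_pos (by linarith)
  unfold genBinom
  simp [this.ne']

lemma gb_succ (u v : ℝ) (hu : u + 1 ≠ 0) (hv : v + 1 ≠ 0) :
    (v + 1) * genBinom (u + 1) (v + 1) = (u + 1) * genBinom u v := by
  unfold genBinom
  rw [Real.Gamma_add_one hu, Real.Gamma_add_one hv, show u + 1 - (v + 1) + 1 = u - v + 1 by ring]
  rw [← mul_div_assoc, ← mul_div_assoc, mul_assoc (v + 1), mul_div_mul_left _ _ hv]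

lemma jacobi_contig (a b x : ℝ) (ha : -1 < a) (hb : -1 < b) (n : ℕ) :
    (2 * n + a + b + 2) * ((x + 1) / 2) * jacobiP n a (b + 1) x =
      (n + b + 1) * jacobiP n a b x + (n + 1) * jacobiP (n + 1) a b x := by
  have hn : (0:ℝ) ≤ n := Nat.cast_nonneg n
  have h1 : (n + b + 1) * jacobiP n a b x
      = (n + b + 1) * ((x + 1) / 2 * jacobiP n a b x - (x - 1) / 2 * jacobiP n a b x) := by ring
  rw [h1]
  unfold jacobiP
  generalize (x - 1) / 2 = u
  generalize (x + 1) / 2 = v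
  rw [mul_assoc (2 * (n:ℝ) + a + b + 2)]
  have hv : ∀ f : ℕ → ℝ, v * ∑ k ∈ Finset.range (n + 1), f k * u ^ k * v ^ (n - k)
      = f 0 * v ^ (n + 1) + ∑ k ∈ Finset.range n, f (k + 1) * u ^ (k + 1) * v ^ (n - k) := by
    intro f
    rw [Finset.sum_range_succ', mul_add, add_comm, Finset.mul_sum]
    congr 1
    · simp; ring
    · apply Finset.sum_congr rfl
      intro k hk
      have := Finset.mem_range.1 hk
      rw [show n - k = n - (k + 1) + 1 by omega]
      ring
  have hu : ∀ f : ℕ → ℝ, u * ∑ k ∈ Finset.range (n + 1), f k * u ^ k * v ^ (n - k)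
      = f n * u ^ (n + 1) + ∑ k ∈ Finset.range n, f k * u ^ (k + 1) * v ^ (n - k) := by
    intro f
    rw [Finset.sum_range_succ, mul_add, add_comm, Finset.mul_sum]
    congr 1
    · simp; ring
    · apply Finset.sum_congr rfl
      intro k hk
      ring
  rw [hv (fun k => genBinom (n + a) (n - k) * genBinom (n + (b + 1)) k),
    hv (fun k => genBinom (n + a) (n - k) * genBinom (n + b) k),
    hu (fun k => genBinom (n + a) (n - k) * genBinom (n + b) k),
    Finset.sum_range_succ', Finset.sum_range_succ]
  simp only [Nat.add_sub_add_right, Nat.cast_zero, sub_zero, pow_zero, mul_one, Nat.sub_zero,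
    Nat.sub_self, sub_self]
  rw [gb_zero _ (by linarith), gb_zero _ (by linarith), gb_zero _ (by linarith),
    gb_zero _ (by push_cast; linarith), gb_zero _ (by push_cast; linarith)]
  have c0 := gb_succ (n + a) n (by linarith) (by linarith)
  have c1 := gb_succ (n + b) n (by linarith) (by linarith)
  rw [show (n:ℝ) + a + 1 = n + 1 + a by ring] at c0
  rw [show (n:ℝ) + b + 1 = n + 1 + b by ring] at c1
  have hS : (2 * n + a + b + 2) * ∑ k ∈ Finset.range n, genBinom (n + a) (n - (k + 1 : ℕ)) * genBinom (n + (b + 1)) (k + 1 : ℕ) * u ^ (k + 1) * v ^ (n - k)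
     = (n + b + 1) * ((∑ k ∈ Finset.range n, genBinom (n + a) (n - (k + 1 : ℕ)) * genBinom (n + b) (k + 1 : ℕ) * u ^ (k + 1) * v ^ (n - k))
       - ∑ k ∈ Finset.range n, genBinom (n + a) (n - k) * genBinom (n + b) k * u ^ (k + 1) * v ^ (n - k))
      + (n + 1) * ∑ k ∈ Finset.range n, genBinom ((n + 1 : ℕ) + a) ((n + 1 : ℕ) - (k + 1 : ℕ)) * genBinom ((n + 1 : ℕ) + b) (k + 1 : ℕ) * u ^ (k + 1) * v ^ (n - k) := by
    rw [← Finset.sum_sub_distrib, Finset.mul_sum, Finset.mul_sum, Finset.mul_sum, ← Finset.sum_add_distrib]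
    apply Finset.sum_congr rfl
    intro k hk
    have := Finset.mem_range.1 hk
    obtain ⟨m, hm⟩ : ∃ m, n = k + 1 + m := ⟨n - (k + 1), by omega⟩
    have := gb_coef_mid a b ha hb k m n (by rw [hm]; push_cast; ring) (k + 1) rfl
    push_cast
    linear_combination (u ^ (k + 1) * v ^ (n - k)) * this
  push_cast at hS c0 c1 ⊢
  linear_combination hS - v ^ (n + 1) * c0 - u ^ (n + 1) * c1

lemma sin_half_int (c : ℝ) (hc : -1 < c) :
    IntervalIntegrable (fun θ : ℝ => Real.sin (θ / 2) ^ c) volume 0 π := by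
  have hg : IntervalIntegrable (fun θ : ℝ => 1 + (1 / π) ^ c * θ ^ c) volume 0 π :=
    intervalIntegrable_const.add ((intervalIntegral.intervalIntegrable_rpow' hc).const_mul _)
  refine hg.mono_fun' (by
    apply Measurable.aestronglyMeasurable
    fun_prop) ?_
  rw [uIoc_of_le pi_pos.le]
  filter_upwards [ae_restrict_mem measurableSet_Ioc] with θ hθ
  have h1 : 0 < Real.sin (θ / 2) := Real.sin_pos_of_pos_of_lt_pi (by linarith [hθ.1]) (by linarith [hθ.2, pi_pos])
  have h2 : 1 / π * θ ≤ Real.sin (θ / 2) := by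
    have := Real.mul_le_sin (x := θ / 2) (by linarith [hθ.1]) (by linarith [hθ.2])
    calc 1 / π * θ = 2 / π * (θ / 2) := by ring
      _ ≤ _ := this
  have h3 : 0 < 1 / π * θ := mul_pos (by positivity) hθ.1
  rw [Real.norm_of_nonneg (by positivity), ← Real.mul_rpow (by positivity) hθ.1.le]
  rcases le_total 0 c with h | h
  · have := Real.rpow_le_one h1.le (Real.sin_le_one _) h
    have : 0 < (1 / π * θ) ^ c := by positivity
    linarith
  · have := Real.rpow_le_rpow_of_nonpos h3 h2 h
    linarith

lemma cos_half_int (c : ℝ) (hc : -1 < c) :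
    IntervalIntegrable (fun θ : ℝ => Real.cos (θ / 2) ^ c) volume 0 π := by
  have h := ((sin_half_int c hc).comp_sub_left π).symm
  simp only [sub_self, sub_zero] at h
  convert h using 3 with θ
  rw [← Real.sin_pi_div_two_sub]
  congr 1
  ring

lemma weight_int (c d : ℝ) (hc : -1 < c) (hd : -1 < d) :
    IntervalIntegrable (fun θ : ℝ => Real.sin (θ / 2) ^ c * Real.cos (θ / 2) ^ d) volume 0 π := by
  have hp := pi_pos
  have a1 : IntervalIntegrable (fun θ : ℝ => Real.sin (θ / 2) ^ c) volume 0 (π / 2) :=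
    (sin_half_int c hc).mono_set (by
      rw [uIcc_of_le (by linarith), uIcc_of_le (by linarith)]; exact Icc_subset_Icc le_rfl (by linarith))
  have a2 : IntervalIntegrable (fun θ : ℝ => Real.cos (θ / 2) ^ d) volume (π / 2) π :=
    (cos_half_int d hd).mono_set (by
      rw [uIcc_of_le (by linarith), uIcc_of_le (by linarith)]; exact Icc_subset_Icc (by linarith) le_rfl)
  refine IntervalIntegrable.trans (b := π / 2) (a1.mul_continuousOn ?_) (a2.continuousOn_mul ?_)
  · rw [uIcc_of_le (by linarith)]
    apply ContinuousOn.rpow_const (by fun_prop)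
    intro x hx
    left
    exact (Real.cos_pos_of_mem_Ioo ⟨by linarith [hx.1], by linarith [hx.2]⟩).ne'
  · rw [uIcc_of_le (by linarith)]
    apply ContinuousOn.rpow_const (by fun_prop)
    intro x hx
    left
    exact (Real.sin_pos_of_pos_of_lt_pi (by linarith [hx.1]) (by linarith [hx.2])).ne'

lemma FJ_int (α β : ℝ) (hα : -1/2 < α) (hβ : -1/2 < β) (δ : ℝ)
    (hδ : 0 < δ) (n : ℕ) (t : ℝ) (ht : t ∈ Set.Ioc (0:ℝ) π) :
    IntervalIntegrable (fun θ : ℝ => (t - θ) ^ δ * jacobiP n (α - 1/2) (β - 1/2) (Real.cos θ) *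
    (Real.sin (θ / 2)) ^ (2 * α) * (Real.cos (θ / 2)) ^ (2 * β)) volume 0 t := by
  have h := (weight_int (2 * α) (2 * β) (by linarith) (by linarith)).mono_set
    (c := 0) (d := t) (by
      rw [uIcc_of_le ht.1.le, uIcc_of_le pi_pos.le]; exact Icc_subset_Icc le_rfl ht.2)
  have hc : Continuous (fun θ : ℝ => (t - θ) ^ δ * jacobiP n (α - 1/2) (β - 1/2) (Real.cos θ)) := by
    apply Continuous.mul
    · exact Continuous.rpow_const (by fun_prop) (fun _ => Or.inr hδ.le)
    · unfold jacobiP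
      fun_prop
  have := h.continuousOn_mul hc.continuousOn
  simpa only [mul_assoc] using this

theorem FJ_beta_recurrence (α β : ℝ) (hα : -1/2 < α) (hβ : -1/2 < β) (δ : ℝ)
    (hδ : 0 < δ) (n : ℕ) (t : ℝ) (ht : t ∈ Set.Ioc (0:ℝ) π) :
    FJ n α (β + 1) δ t =
      ((n : ℝ) + β + 1/2) / (2 * (n : ℝ) + α + β + 1) * FJ n α β δ t +
      ((n : ℝ) + 1) / (2 * (n : ℝ) + α + β + 1) * FJ (n + 1) α β δ t := by
  have hn : (0:ℝ) ≤ n := Nat.cast_nonneg n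
  have hD : 2 * (n : ℝ) + α + β + 1 ≠ 0 := by linarith
  have i1 := FJ_int α β hα hβ δ hδ n t ht
  have i2 := FJ_int α β hα hβ δ hδ (n + 1) t ht
  unfold FJ
  rw [← intervalIntegral.integral_const_mul, ← intervalIntegral.integral_const_mul,
    ← intervalIntegral.integral_add (i1.const_mul _) (i2.const_mul _)]
  apply intervalIntegral.integral_congr_ae
  have hne : ∀ᵐ θ : ℝ ∂volume, θ ≠ π := Measure.ae_ne volume π
  filter_upwards [hne] with θ hθπ hθ
  rw [uIoc_of_le ht.1.le] at hθ
  have hlt : θ < π := lt_of_le_of_ne (hθ.2.trans ht.2) hθπ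
  have hcos : 0 < Real.cos (θ / 2) := Real.cos_pos_of_mem_Ioo ⟨by linarith [hθ.1, pi_pos], by linarith⟩
  have e : Real.cos (θ / 2) ^ (2 * (β + 1)) = Real.cos (θ / 2) ^ (2 * β) * ((Real.cos θ + 1) / 2) := by
    rw [show 2 * (β + 1) = 2 * β + 2 by ring, Real.rpow_add hcos, Real.rpow_two, Real.cos_sq]
    ring_nf
  have key := jacobi_contig (α - 1/2) (β - 1/2) (Real.cos θ) (by linarith) (by linarith) n
  rw [e, show β + 1 - 1/2 = β - 1/2 + 1 by ring]
  have key2 : (Real.cos θ + 1) / 2 * jacobiP n (α - 1/2) (β - 1/2 + 1) (Real.cos θ) =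
      ((n : ℝ) + β + 1/2) / (2 * (n : ℝ) + α + β + 1) * jacobiP n (α - 1/2) (β - 1/2) (Real.cos θ) +
      ((n : ℝ) + 1) / (2 * (n : ℝ) + α + β + 1) * jacobiP (n + 1) (α - 1/2) (β - 1/2) (Real.cos θ) := by
    clear i1 i2 e
    generalize jacobiP n (α - 1/2) (β - 1/2 + 1) (Real.cos θ) = X at *
    generalize jacobiP n (α - 1/2) (β - 1/2) (Real.cos θ) = Y at *
    generalize jacobiP (n + 1) (α - 1/2) (β - 1/2) (Real.cos θ) = Z at *
    field_simp
    linear_combination 2 * key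
  linear_combination ((t - θ) ^ δ * Real.sin (θ / 2) ^ (2 * α) * Real.cos (θ / 2) ^ (2 * β)) * key2
end

section
/- Let α, β ∈ ℕ (nonnegative integers) with max{α, β} > 0, and let δ be a real number with δ ≥ α + 1. Then there exists a constant c > 0 such that for every integer n ≥ 1 and every t ∈ (0, π], |F_n^{(α,β),δ}(t)| ≤ c · n^{-α-5/2}. -/
open MeasureTheory Real Set

/-- class of families with difference bounds up to level `j`, order `s` -/
abbrev DD (j : ℕ) : ℝ → (ℕ → ℝ → ℝ) → Prop :=
  Nat.rec (fun s f => ∃ C : ℝ, ∀ n : ℕ, 1 ≤ n → ∀ t ∈ Set.Ioc (0:ℝ) π, |f n t| ≤ C * (n : ℝ) ^ s)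
    (fun _ D s f => (∃ C : ℝ, ∀ n : ℕ, 1 ≤ n → ∀ t ∈ Set.Ioc (0:ℝ) π,
      |f n t| ≤ C * (n : ℝ) ^ s) ∧ D (s - 1) (fun n t => f (n + 1) t - f n t)) j

lemma DD.zero {j : ℕ} {s : ℝ} {f : ℕ → ℝ → ℝ} (h : DD j s f) : DD 0 s f := by
  cases j with
  | zero => exact h
  | succ j => exact h.1

lemma DD.nonneg {s : ℝ} {f : ℕ → ℝ → ℝ} (h : DD 0 s f) :
    ∃ C : ℝ, 0 ≤ C ∧ ∀ n : ℕ, 1 ≤ n → ∀ t ∈ Set.Ioc (0:ℝ) π, |f n t| ≤ C * (n : ℝ) ^ s := by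
  obtain ⟨C, hC⟩ := h
  refine ⟨|C|, abs_nonneg C, fun n hn t ht => (hC n hn t ht).trans ?_⟩
  gcongr
  exact le_abs_self C

lemma DD.congr {j : ℕ} {s : ℝ} {f g : ℕ → ℝ → ℝ} (h : DD j s f)
    (hfg : ∀ n : ℕ, 1 ≤ n → ∀ t ∈ Set.Ioc (0:ℝ) π, f n t = g n t) : DD j s g := by
  induction j generalizing s f g with
  | zero =>
    obtain ⟨C, hC⟩ := h
    exact ⟨C, fun n hn t ht => by rw [← hfg n hn t ht]; exact hC n hn t ht⟩
  | succ j ih =>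
    have h0 : DD 0 s g := by
      obtain ⟨C, hC⟩ := h.1
      exact ⟨C, fun n hn t ht => by rw [← hfg n hn t ht]; exact hC n hn t ht⟩
    exact ⟨h0, ih h.2 fun n hn t ht => by
      simp only [hfg n hn t ht, hfg (n + 1) (by omega) t ht]⟩

lemma DD.add0 {s : ℝ} {f g : ℕ → ℝ → ℝ} (hf : DD 0 s f) (hg : DD 0 s g) :
    DD 0 s (fun n t => f n t + g n t) := by
  obtain ⟨C, hC⟩ := hf
  obtain ⟨D, hD⟩ := hg
  refine ⟨C + D, fun n hn t ht => (abs_add_le _ _).trans ?_⟩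
  rw [add_mul]
  exact add_le_add (hC n hn t ht) (hD n hn t ht)

lemma DD.add {j : ℕ} {s : ℝ} {f g : ℕ → ℝ → ℝ} (hf : DD j s f) (hg : DD j s g) :
    DD j s (fun n t => f n t + g n t) := by
  induction j generalizing s f g with
  | zero => exact DD.add0 hf hg
  | succ j ih =>
    exact ⟨DD.add0 hf.1 hg.1, (ih hf.2 hg.2).congr fun n _ t _ => by ring⟩

lemma DD.mul0 {s r : ℝ} {f g : ℕ → ℝ → ℝ} (hf : DD 0 s f) (hg : DD 0 r g) :
    DD 0 (s + r) (fun n t => f n t * g n t) := by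
  obtain ⟨C, hC0, hC⟩ := hf.nonneg
  obtain ⟨D, hD0, hD⟩ := hg.nonneg
  refine ⟨C * D, fun n hn t ht => ?_⟩
  have hn0 : (0:ℝ) < n := by exact_mod_cast hn
  rw [abs_mul, Real.rpow_add hn0]
  calc |f n t| * |g n t| ≤ (C * (n:ℝ) ^ s) * (D * (n:ℝ) ^ r) := by
        gcongr
        · exact hC n hn t ht
        · exact hD n hn t ht
    _ = _ := by ring

lemma DD.shift {j : ℕ} {s : ℝ} (hs : s ≤ 0) {f : ℕ → ℝ → ℝ} (hf : DD j s f) :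
    DD j s (fun n t => f (n + 1) t) := by
  have h0 : ∀ {s : ℝ} {f : ℕ → ℝ → ℝ}, s ≤ 0 → DD 0 s f → DD 0 s (fun n t => f (n + 1) t) := by
    intro s f hs hf
    obtain ⟨C, hC0, hC⟩ := hf.nonneg
    refine ⟨C, fun n hn t ht => (hC (n + 1) (by omega) t ht).trans ?_⟩
    have hn0 : (0:ℝ) < n := by exact_mod_cast hn
    have : ((n + 1 : ℕ) : ℝ) ^ s ≤ (n : ℝ) ^ s :=
      Real.rpow_le_rpow_of_nonpos hn0 (by push_cast; linarith) hs
    gcongr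
  induction j generalizing s f with
  | zero => exact h0 hs hf
  | succ j ih => exact ⟨h0 hs hf.1, ih (by linarith) hf.2⟩

lemma DD.weak {s r : ℝ} (hsr : s ≤ r) {j : ℕ} {f : ℕ → ℝ → ℝ} (hf : DD j s f) : DD j r f := by
  have h0 : ∀ {s r : ℝ} {f : ℕ → ℝ → ℝ}, s ≤ r → DD 0 s f → DD 0 r f := by
    intro s r f hs hf
    obtain ⟨C, hC0, hC⟩ := hf.nonneg
    refine ⟨C, fun n hn t ht => (hC n hn t ht).trans ?_⟩
    have hn0 : (1:ℝ) ≤ n := by exact_mod_cast hn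
    gcongr
  induction j generalizing s r f with
  | zero => exact h0 hsr hf
  | succ j ih => exact ⟨h0 hsr hf.1, ih (by linarith) hf.2⟩

lemma DD.pred {j : ℕ} {s : ℝ} {f : ℕ → ℝ → ℝ} (hf : DD (j + 1) s f) : DD j s f := by
  induction j generalizing s f with
  | zero => exact hf.1
  | succ j ih => exact ⟨hf.1, ih hf.2⟩

lemma DD.constmul {j : ℕ} {s : ℝ} {f : ℕ → ℝ → ℝ} (b : ℝ → ℝ) (B : ℝ)
    (hb : ∀ t ∈ Set.Ioc (0:ℝ) π, |b t| ≤ B) (hf : DD j s f) :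
    DD j s (fun n t => b t * f n t) := by
  have h0 : ∀ {s : ℝ} {f : ℕ → ℝ → ℝ}, DD 0 s f → DD 0 s (fun n t => b t * f n t) := by
    intro s f hf
    obtain ⟨C, hC0, hC⟩ := hf.nonneg
    refine ⟨B * C, fun n hn t ht => ?_⟩
    rw [abs_mul, mul_assoc]
    exact mul_le_mul (hb t ht) (hC n hn t ht) (abs_nonneg _) ((abs_nonneg _).trans (hb t ht))
  induction j generalizing s f with
  | zero => exact h0 hf
  | succ j ih => exact ⟨h0 hf.1, (ih hf.2).congr fun n _ t _ => by ring⟩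

lemma DD.smul {j : ℕ} {s : ℝ} {f : ℕ → ℝ → ℝ} (b : ℝ) (hf : DD j s f) :
    DD j s (fun n t => b * f n t) :=
  hf.constmul (fun _ => b) |b| (fun _ _ => le_rfl)

lemma DD.sub {j : ℕ} {s : ℝ} {f g : ℕ → ℝ → ℝ} (hf : DD j s f) (hg : DD j s g) :
    DD j s (fun n t => f n t - g n t) :=
  (hf.add (hg.smul (-1))).congr fun n _ t _ => by ring

lemma DD.mul {j : ℕ} {s r : ℝ} (hs : s ≤ 0) (hr : r ≤ 0) {f g : ℕ → ℝ → ℝ}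
    (hf : DD j s f) (hg : DD j r g) :
    DD j (s + r) (fun n t => f n t * g n t) := by
  induction j generalizing s r f g with
  | zero => exact DD.mul0 hf hg
  | succ j ih =>
    refine ⟨DD.mul0 hf.1 hg.1, ?_⟩
    have h1 := ih (by linarith) hr hf.2 (hg.shift hr).pred
    have h2 := ih hs (by linarith) hf.pred hg.2
    rw [show s - 1 + r = s + r - 1 by ring] at h1
    rw [show s + (r - 1) = s + r - 1 by ring] at h2
    exact (h1.add h2).congr fun n _ t _ => by ring

lemma DD.gain {j : ℕ} {s : ℝ} (hs : s ≤ 0) {f : ℕ → ℝ → ℝ} (hf : DD j (s - 1) f) :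
    DD (j + 1) s f :=
  ⟨hf.zero.weak (by linarith), (hf.shift (by linarith)).sub hf⟩

lemma DD_const (j : ℕ) (b : ℝ) : DD j 0 (fun _ _ => b) := by
  have h0 : ∀ (j : ℕ) (s : ℝ), DD j s (fun _ _ => 0) := by
    intro j
    induction j with
    | zero => exact fun s => ⟨0, fun n hn t ht => by simp⟩
    | succ j ih => exact fun s => ⟨⟨0, fun n hn t ht => by simp⟩, (ih _).congr fun n _ t _ => by simp⟩
  have hb : DD 0 0 (fun _ _ => b) := ⟨|b|, fun n hn t ht => by simp⟩
  cases j with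
  | zero => exact hb
  | succ j => exact ⟨hb, (h0 j _).congr fun n _ t _ => by simp⟩

lemma DD_inv (j : ℕ) (c : ℝ) (hc : 0 ≤ c) : DD j (-1) (fun n _ => 1 / ((n:ℝ) + c)) := by
  have h0 : ∀ c : ℝ, 0 ≤ c → DD 0 (-1) (fun n _ => 1 / ((n:ℝ) + c)) := by
    intro c hc
    refine ⟨1, fun n hn t ht => ?_⟩
    have hn0 : (0:ℝ) < n := by exact_mod_cast hn
    rw [Real.rpow_neg_one, abs_of_nonneg (by positivity), one_mul, ← one_div]
    exact one_div_le_one_div_of_le hn0 (by linarith)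
  induction j generalizing c with
  | zero => exact h0 c hc
  | succ j ih =>
    refine ⟨h0 c hc, ?_⟩
    have := ((ih c hc).mul (by norm_num) (by norm_num) (ih (c + 1) (by linarith))).smul (-1)
    rw [show (-1:ℝ) + -1 = -1 - 1 by ring] at this
    refine this.congr fun n hn t _ => ?_
    have hn0 : (0:ℝ) < n := by exact_mod_cast hn
    push_cast
    field_simp
    ring

/-- `p_n` -/
noncomputable def pp (n : ℕ) : ℝ := ∏ i ∈ Finset.range n, (((i:ℝ) + 1/2) / ((i:ℝ) + 1))

lemma pp_succ (n : ℕ) : pp (n + 1) = pp n * (((n:ℝ) + 1/2) / ((n:ℝ) + 1)) := by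
  rw [pp, pp, Finset.prod_range_succ]

lemma pp_pos (n : ℕ) : 0 < pp n := Finset.prod_pos fun i _ => by positivity

lemma pp_sq (n : ℕ) : pp n ^ 2 * ((n:ℝ) + 1/2) ≤ 1 / 2 := by
  induction n with
  | zero => simp [pp]
  | succ n ih =>
    refine le_trans ?_ ih
    rw [pp_succ, mul_pow, mul_assoc]
    gcongr
    rw [div_pow, div_mul_eq_mul_div, div_le_iff₀ (by positivity)]
    push_cast
    nlinarith [n.cast_nonneg (α := ℝ)]

lemma DD_pp (j : ℕ) : DD j (-1/2) (fun n _ => pp n) := by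
  have h0 : DD 0 (-1/2) (fun n _ => pp n) := by
    refine ⟨1, fun n hn t ht => ?_⟩
    have hn0 : (0:ℝ) < n := by exact_mod_cast hn
    rw [abs_of_pos (pp_pos n), one_mul, show (-1/2 : ℝ) = -(1/2) by ring, Real.rpow_neg hn0.le,
      ← Real.sqrt_eq_rpow, ← Real.sqrt_inv]
    apply Real.le_sqrt_of_sq_le
    rw [← one_div, le_div_iff₀ hn0]
    have := pp_sq n
    have h2 := sq_nonneg (pp n)
    linarith
  induction j with
  | zero => exact h0
  | succ j ih =>
    refine ⟨h0, ?_⟩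
    have := (ih.mul (by norm_num) (by norm_num) (DD_inv j 1 (by norm_num))).smul (-1/2)
    rw [show (-1/2:ℝ) + -1 = -1/2 - 1 by ring] at this
    refine this.congr fun n hn t _ => ?_
    have hn0 : (0:ℝ) < n := by exact_mod_cast hn
    simp only [pp_succ]
    field_simp
    ring

/-- u-type coefficient in `Sym 0`. -/
lemma DD_ratio (j : ℕ) (a c : ℝ) (hc : 0 ≤ c) :
    DD j 0 (fun n _ => ((n:ℝ) + a) / (2 * ((n:ℝ) + c))) := by
  have h := (DD_const j (1/2)).add (((DD_inv j c hc).weak (r := 0) (by norm_num)).smul ((a - c)/2))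
  refine h.congr fun n hn t _ => ?_
  have hn0 : (0:ℝ) < n := by exact_mod_cast hn
  field_simp
  ring

lemma DD_stepA {j : ℕ} {s : ℝ} (hs : s ≤ 0) {f : ℕ → ℝ → ℝ} (hf : DD (j + 1) s f) (a b c : ℝ)
    (hc : 0 ≤ c) :
    DD j (s - 1) (fun n t => ((n:ℝ) + a) / (2 * ((n:ℝ) + c)) * f n t
      - ((n:ℝ) + b) / (2 * ((n:ℝ) + c)) * f (n + 1) t) := by
  have h1 := (DD_ratio j a c hc).mul le_rfl (by linarith) hf.2
  have h2 := ((DD_inv j c hc).mul (by norm_num) hs (hf.pred.shift hs)).smul ((a - b)/2)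
  rw [zero_add] at h1
  rw [show -1 + s = s - 1 by ring] at h2
  refine (h2.sub h1).congr fun n hn t _ => ?_
  have hn0 : (0:ℝ) < n := by exact_mod_cast hn
  field_simp
  ring

lemma DD_stepB {j : ℕ} {s : ℝ} (hs : s ≤ 0) {f : ℕ → ℝ → ℝ} (hf : DD j s f) (a b c : ℝ)
    (hc : 0 ≤ c) :
    DD j s (fun n t => ((n:ℝ) + a) / (2 * ((n:ℝ) + c)) * f n t
      + ((n:ℝ) + b) / (2 * ((n:ℝ) + c)) * f (n + 1) t) := by
  have h1 := (DD_ratio j a c hc).mul le_rfl hs hf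
  have h2 := (DD_ratio j b c hc).mul le_rfl hs (hf.shift hs)
  rw [zero_add] at h1 h2
  exact h1.add h2

/-- the basic oscillatory integral -/
noncomputable def II (δ φ : ℝ) (m : ℕ) (t : ℝ) : ℝ :=
  ∫ θ in (0:ℝ)..t, (t - θ) ^ δ * Real.cos (m * θ + φ)

lemma ii_sub_rpow {r t : ℝ} (hr : -1 < r) :
    IntervalIntegrable (fun θ : ℝ => (t - θ) ^ r) volume 0 t := by
  have := (intervalIntegral.intervalIntegrable_rpow' (a := 0) (b := t) hr).comp_sub_left t
  simpa using this.symm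

lemma integral_sub_rpow {δ t : ℝ} (hδ : 0 < δ) (ht : 0 < t) :
    ∫ θ in (0:ℝ)..t, (t - θ) ^ (δ - 1) = t ^ δ / δ := by
  rw [intervalIntegral.integral_comp_sub_left (fun x => x ^ (δ - 1)) t]
  rw [integral_rpow (Or.inl (by linarith))]
  simp [Real.zero_rpow hδ.ne']

lemma II_parts {δ : ℝ} (hδ : 0 < δ) (φ : ℝ) (m : ℕ) (hm : 1 ≤ m) {t : ℝ} (ht : 0 < t) :
    II δ φ m t = -(Real.sin φ) * t ^ δ * (1 / ((m:ℝ) + 0))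
      + δ * (1 / ((m:ℝ) + 0) * II (δ - 1) (φ - π / 2) m t) := by
  have hm0 : (0:ℝ) < m := by exact_mod_cast hm
  have e : II (δ - 1) (φ - π / 2) m t
      = ∫ θ in (0:ℝ)..t, (t - θ) ^ (δ - 1) * Real.sin (m * θ + φ) := by
    unfold II
    congr 1
    ext θ
    rw [← Real.cos_sub_pi_div_two]
    ring_nf
  have i1 : IntervalIntegrable (fun θ : ℝ => (t - θ) ^ δ * Real.cos (m * θ + φ)) volume 0 t :=
    (ii_sub_rpow (by linarith)).mul_continuousOn (by fun_prop)
  have i2 : IntervalIntegrable (fun θ : ℝ => (t - θ) ^ (δ - 1) * Real.sin (m * θ + φ))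
      volume 0 t :=
    (ii_sub_rpow (by linarith)).mul_continuousOn (by fun_prop)
  have key := intervalIntegral.integral_eq_sub_of_hasDerivAt_of_le
    (f := fun θ : ℝ => (t - θ) ^ δ * (Real.sin (m * θ + φ) / m))
    (f' := fun θ : ℝ => (t - θ) ^ δ * Real.cos (m * θ + φ)
      - (δ / m) * ((t - θ) ^ (δ - 1) * Real.sin (m * θ + φ))) ht.le ?_ ?_
      (i1.sub (i2.const_mul (δ / m)))
  · rw [intervalIntegral.integral_sub i1 (i2.const_mul (δ / m)),
      intervalIntegral.integral_const_mul, ← e] at key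
    simp only [sub_self, Real.zero_rpow hδ.ne', sub_zero, mul_zero, zero_add, zero_mul,
      zero_sub] at key
    change II δ φ m t - _ = _ at key
    rw [sub_eq_iff_eq_add] at key
    rw [key, add_zero]
    ring
  · apply ContinuousOn.mul
    · exact ContinuousOn.rpow_const (by fun_prop) fun x _ => Or.inr hδ.le
    · fun_prop
  · intro θ hθ
    have h1 : HasDerivAt (fun θ : ℝ => (t - θ) ^ δ) (-1 * δ * (t - θ) ^ (δ - 1)) θ :=
      ((hasDerivAt_id θ).const_sub t).rpow_const (Or.inl (by simp; linarith [hθ.2]))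
    have h2 : HasDerivAt (fun θ : ℝ => Real.sin (m * θ + φ) / m) (Real.cos (m * θ + φ)) θ := by
      have := ((((hasDerivAt_id θ).const_mul (m:ℝ)).add_const φ).sin).div_const (m:ℝ)
      refine this.congr_deriv ?_
      simp only [id]
      field_simp
    refine (h1.mul h2).congr_deriv ?_
    ring

lemma rpow_bdd {δ : ℝ} (hδ : 0 ≤ δ) (b : ℝ) : ∀ t ∈ Set.Ioc (0:ℝ) π, |b * t ^ δ| ≤ |b| * π ^ δ := by
  intro t ht
  rw [abs_mul, abs_of_nonneg (Real.rpow_nonneg ht.1.le _)]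
  gcongr
  · exact ht.1.le
  · exact ht.2

lemma DD_II (j : ℕ) (δ φ : ℝ) (hδ : (j:ℝ) ≤ δ) : DD j (-1) (II δ φ) := by
  induction j generalizing δ φ with
  | zero =>
    simp only [Nat.cast_zero] at hδ
    rcases hδ.eq_or_lt with h0 | h0
    · subst h0
      refine ⟨2, fun m hm t ht => ?_⟩
      have hm0 : (0:ℝ) < m := by exact_mod_cast hm
      have : II 0 φ m t = (Real.sin (m * t + φ) - Real.sin φ) / m := by
        unfold II
        simp only [Real.rpow_zero, one_mul]
        rw [intervalIntegral.integral_comp_mul_add (fun x => Real.cos x) hm0.ne' φ]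
        simp [integral_cos]
        field_simp
      rw [this, Real.rpow_neg_one, abs_div, abs_of_pos hm0, div_eq_mul_inv]
      gcongr
      have h1 := Real.sin_le_one (m * t + φ)
      have h2 := Real.neg_one_le_sin (m * t + φ)
      have h3 := Real.sin_le_one φ
      have h4 := Real.neg_one_le_sin φ
      rw [abs_le]
      constructor <;> linarith
    · have h1 := (DD_inv 0 0 le_rfl).constmul _ _ (rpow_bdd h0.le (-(Real.sin φ)))
      have hI : DD 0 0 (II (δ - 1) (φ - π / 2)) := by
        refine ⟨1 / δ * π ^ δ, fun m hm t ht => ?_⟩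
        rw [Real.rpow_zero, mul_one]
        unfold II
        rw [← Real.norm_eq_abs]
        refine (intervalIntegral.norm_integral_le_of_norm_le ht.1.le (g := fun θ => (t - θ) ^ (δ - 1))
          ?_ (ii_sub_rpow (by linarith))).trans ?_
        · refine Filter.Eventually.of_forall fun θ hθ => ?_
          have : 0 ≤ (t - θ) ^ (δ - 1) := Real.rpow_nonneg (by linarith [hθ.2]) _
          rw [norm_mul, Real.norm_eq_abs, Real.norm_eq_abs, abs_of_nonneg this]
          exact mul_le_of_le_one_right this (Real.abs_cos_le_one _)
        · rw [integral_sub_rpow h0 ht.1, one_div_mul_eq_div]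
          gcongr
          · exact ht.1.le
          · exact ht.2
      have h2 := ((DD_inv 0 0 le_rfl).mul (by norm_num) le_rfl hI).smul δ
      rw [add_zero] at h2
      exact (h1.add h2).congr fun m hm t ht => (II_parts h0 φ m hm ht.1).symm
  | succ j ih =>
    push_cast at hδ
    have h0 : 0 < δ := by have := j.cast_nonneg (α := ℝ); linarith
    have h1 := (DD_inv (j + 1) 0 le_rfl).constmul _ _ (rpow_bdd h0.le (-(Real.sin φ)))
    have h2 := ((DD_inv j 0 le_rfl).mul (by norm_num) (by norm_num)
      (ih (δ - 1) (φ - π / 2) (by linarith))).smul δ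
    rw [show (-1:ℝ) + -1 = -1 - 1 by ring] at h2
    have h3 := h2.gain (by norm_num)
    exact (h1.add h3).congr fun m hm t ht => (II_parts h0 φ m hm ht.1).symm

lemma DD_II0 (j : ℕ) (δ : ℝ) (hδ : (j:ℝ) + 1 ≤ δ) : DD j (-2) (II δ 0) := by
  have h0 : 0 < δ := by have := j.cast_nonneg (α := ℝ); linarith
  have h2 := ((DD_inv j 0 le_rfl).mul (by norm_num) (by norm_num)
      (DD_II j (δ - 1) (0 - π / 2) (by linarith))).smul δ
  rw [show (-1:ℝ) + -1 = -2 by ring] at h2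
  refine h2.congr fun m hm t ht => ?_
  rw [II_parts h0 0 m hm ht.1]
  simp

/-- polynomial binomial -/
noncomputable def BB (u : ℝ) (k : ℕ) : ℝ := ∏ i ∈ Finset.range k, ((u - i) / ((i:ℝ) + 1))

lemma BB_zero (u : ℝ) : BB u 0 = 1 := by simp [BB]

lemma BB_succ (u : ℝ) (k : ℕ) : BB u (k + 1) = BB u k * ((u - k) / ((k:ℝ) + 1)) := by
  rw [BB, BB, Finset.prod_range_succ]

lemma BB_absorb (u : ℝ) (k : ℕ) : ((k:ℝ) + 1) * BB (u + 1) (k + 1) = (u + 1) * BB u k := by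
  induction k with
  | zero => simp [BB_succ, BB_zero]
  | succ k ih =>
    rw [BB_succ (u + 1) (k + 1), BB_succ u k]
    have h : BB (u + 1) (k + 1) = (u + 1) * BB u k / ((k:ℝ) + 1) := by
      field_simp
      linarith
    rw [h]
    push_cast
    field_simp
    ring

lemma BB_pascal (u : ℝ) (k : ℕ) : BB (u + 1) (k + 1) = BB u (k + 1) + BB u k := by
  have h : BB (u + 1) (k + 1) = (u + 1) * BB u k / ((k:ℝ) + 1) := by
    have := BB_absorb u k
    field_simp
    linarith
  rw [h, BB_succ]
  field_simp
  ring

lemma genBinom_eq_s11 (u : ℝ) (k : ℕ) (h : -1 < u - k) : genBinom u k = BB u k := by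
  induction k with
  | zero =>
    simp only [Nat.cast_zero, sub_zero] at h
    have : Real.Gamma (u + 1) ≠ 0 := (Real.Gamma_pos_of_pos (by linarith)).ne'
    simp [genBinom, BB_zero, this]
  | succ k ih =>
    push_cast at h
    have ih := ih (by linarith)
    rw [BB_succ, ← ih]
    unfold genBinom
    have h1 : u - k ≠ 0 := by
      have : 0 < u - k := by linarith
      exact this.ne'
    have h2 : (0:ℝ) < (k:ℝ) + 1 := by positivity
    rw [Real.Gamma_add_one h1]
    push_cast
    rw [show u - ((k:ℝ) + 1) + 1 = u - k by ring, Real.Gamma_add_one h2.ne']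
    have g1 : Real.Gamma ((k:ℝ) + 1) ≠ 0 := (Real.Gamma_pos_of_pos h2).ne'
    have g2 : Real.Gamma (u - k) ≠ 0 := (Real.Gamma_pos_of_pos (by linarith)).ne'
    field_simp

/-- homogeneous Jacobi polynomial -/
noncomputable def JP (n : ℕ) (N M y z : ℝ) : ℝ :=
  ∑ p ∈ Finset.HasAntidiagonal.antidiagonal n, BB N p.1 * BB M p.2 * y ^ p.2 * z ^ p.1

lemma JP_swap (n : ℕ) (N M y z : ℝ) : JP n N M y z = JP n M N z y := by
  unfold JP
  rw [← Finset.Nat.sum_antidiagonal_swap]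
  refine Finset.sum_congr rfl fun p _ => ?_
  simp only [Prod.fst_swap, Prod.snd_swap]
  ring

lemma jacobiP_eq (n : ℕ) (a b x : ℝ) (ha : -1 < a) (hb : -1 < b) :
    jacobiP n a b x = JP n (n + a) (n + b) ((x - 1) / 2) ((x + 1) / 2) := by
  rw [JP_swap]
  unfold JP jacobiP
  rw [Finset.Nat.sum_antidiagonal_eq_sum_range_succ_mk]
  refine Finset.sum_congr rfl fun k hk => ?_
  have hk : k ≤ n := by simpa [Nat.lt_succ_iff] using hk
  have hk' : (k:ℝ) ≤ n := by exact_mod_cast hk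
  have hk0 := k.cast_nonneg (α := ℝ)
  rw [← Nat.cast_sub hk, genBinom_eq_s11, genBinom_eq_s11]
  · ring
  · linarith
  · rw [Nat.cast_sub hk]
    linarith

lemma JP_absorb1 (n : ℕ) (N M y z : ℝ) :
    ∑ p ∈ Finset.HasAntidiagonal.antidiagonal (n + 1), (p.1 : ℝ) * (BB (N + 1) p.1 * BB M p.2 * y ^ p.2 * z ^ p.1)
      = (N + 1) * z * JP n N M y z := by
  rw [Finset.Nat.sum_antidiagonal_succ]
  simp only [Nat.cast_zero, zero_mul, zero_add, JP, Finset.mul_sum]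
  refine Finset.sum_congr rfl fun p _ => ?_
  have := BB_absorb N p.1
  push_cast
  linear_combination (BB M p.2 * y ^ p.2 * z ^ (p.1 + 1)) * this

lemma JP_absorb (n : ℕ) (N M y z : ℝ) :
    ((n:ℝ) + 1) * JP (n + 1) (N + 1) (M + 1) y z
      = (N + 1) * z * JP n N (M + 1) y z + (M + 1) * y * JP n (N + 1) M y z := by
  rw [← JP_absorb1, JP_swap n (N + 1) M, ← JP_absorb1, ← Finset.Nat.sum_antidiagonal_swap
    (f := fun p => (p.1 : ℝ) * (BB (M + 1) p.1 * BB (N + 1) p.2 * z ^ p.2 * y ^ p.1)),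
    ← Finset.sum_add_distrib, JP, Finset.mul_sum]
  refine Finset.sum_congr rfl fun p hp => ?_
  have : (p.1:ℝ) + p.2 = n + 1 := by exact_mod_cast Finset.HasAntidiagonal.mem_antidiagonal.1 hp
  rw [← this]
  simp only [Prod.fst_swap, Prod.snd_swap]
  ring

lemma JP_pascal (n : ℕ) (N M y z : ℝ) :
    JP (n + 1) (N + 1) M y z = JP (n + 1) N M y z + z * JP n N M y z := by
  unfold JP
  rw [Finset.Nat.sum_antidiagonal_succ, Finset.Nat.sum_antidiagonal_succ]
  simp only [BB_zero, BB_pascal]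
  rw [Finset.mul_sum, add_assoc, ← Finset.sum_add_distrib]
  congr 1
  refine Finset.sum_congr rfl fun p _ => ?_
  ring

lemma JP_cross (n : ℕ) (N M y z : ℝ) :
    z * (JP n N (M + 1) y z - JP n N M y z) = y * (JP n (N + 1) M y z - JP n N M y z) := by
  cases n with
  | zero => simp [JP, BB_zero]
  | succ n =>
    rw [JP_pascal, JP_swap (n + 1) N (M + 1), JP_pascal, JP_swap (n + 1) M N, JP_swap n M N]
    ring

lemma JP_I (n : ℕ) (N M y z : ℝ) :
    ((n:ℝ) + 1) * JP (n + 1) (N + 1) (M + 1) y z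
      = (N + 1) * (z - y) * JP n N M y z + (N + M + 2) * y * JP n (N + 1) M y z := by
  rw [JP_absorb]
  linear_combination (N + 1) * JP_cross n N M y z

lemma jac_A (n : ℕ) (a b x : ℝ) (ha : -1 < a) (hb : -1 < b) :
    (2 * n + a + b + 2) * ((1 - x) / 2) * jacobiP n (a + 1) b x
      = (n + a + 1) * jacobiP n a b x - (n + 1) * jacobiP (n + 1) a b x := by
  rw [jacobiP_eq _ _ _ _ ha hb, jacobiP_eq _ _ _ _ ha hb, jacobiP_eq _ _ _ _ (by linarith) hb]
  have := JP_I n (n + a) (n + b) ((x - 1) / 2) ((x + 1) / 2)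
  push_cast
  rw [show (n:ℝ) + 1 + a = n + a + 1 by ring, show (n:ℝ) + 1 + b = n + b + 1 by ring,
    show (n:ℝ) + (a + 1) = n + a + 1 by ring]
  linear_combination this

lemma jac_B (n : ℕ) (a b x : ℝ) (ha : -1 < a) (hb : -1 < b) :
    (2 * n + a + b + 2) * ((1 + x) / 2) * jacobiP n a (b + 1) x
      = (n + b + 1) * jacobiP n a b x + (n + 1) * jacobiP (n + 1) a b x := by
  rw [jacobiP_eq _ _ _ _ ha hb, jacobiP_eq _ _ _ _ ha hb, jacobiP_eq _ _ _ _ ha (by linarith)]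
  have := JP_I n (n + b) (n + a) ((x + 1) / 2) ((x - 1) / 2)
  push_cast
  rw [show (n:ℝ) + 1 + a = n + a + 1 by ring, show (n:ℝ) + 1 + b = n + b + 1 by ring,
    show (n:ℝ) + (b + 1) = n + b + 1 by ring]
  rw [JP_swap (n + 1), JP_swap n, JP_swap n (n + a) (n + b)]
  linear_combination -this

/-- rising product of half-integers -/
noncomputable def qq (n : ℕ) : ℝ := ∏ i ∈ Finset.range n, ((i:ℝ) + 1/2)

lemma qq_succ (n : ℕ) : qq (n + 1) = qq n * ((n:ℝ) + 1/2) := by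
  rw [qq, qq, Finset.prod_range_succ]

lemma qq_pos (n : ℕ) : 0 < qq n := Finset.prod_pos fun i _ => by positivity

lemma qq_fact (n : ℕ) : qq n * 4 ^ n * (n.factorial : ℝ) = ((2 * n).factorial : ℝ) := by
  induction n with
  | zero => simp [qq]
  | succ n ih =>
    rw [qq_succ, show 2 * (n + 1) = 2 * n + 1 + 1 by ring, Nat.factorial_succ (2 * n + 1),
      Nat.factorial_succ (2 * n), Nat.factorial_succ n]
    push_cast
    rw [← ih]
    ring

lemma qq_pp (n : ℕ) : qq n = pp n * (n.factorial : ℝ) := by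
  induction n with
  | zero => simp [qq, pp]
  | succ n ih =>
    rw [qq_succ, pp_succ, ih, Nat.factorial_succ]
    push_cast
    field_simp

lemma BB_half (j k : ℕ) :
    BB (((j + k : ℕ) : ℝ) + -1/2) k * qq j * (k.factorial : ℝ) = qq (j + k) := by
  induction k with
  | zero => simp [BB_zero]
  | succ k ih =>
    rw [← add_assoc, qq_succ, ← ih, Nat.factorial_succ]
    have := BB_absorb (((j + k : ℕ) : ℝ) + -1/2) k
    push_cast at this ⊢
    rw [show (j:ℝ) + k + 1 + -1 / 2 = j + k + -1/2 + 1 by ring]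
    linear_combination (qq j * k.factorial) * this

lemma BB_half_mul (j k : ℕ) :
    BB (((j + k : ℕ) : ℝ) + -1/2) j * BB (((j + k : ℕ) : ℝ) + -1/2) k
      = pp (j + k) * ((2 * (j + k)).choose (2 * k) : ℝ) := by
  have h1 := BB_half j k
  have h2 := BB_half k j
  rw [add_comm k j] at h2
  have fj := qq_fact j
  have fk := qq_fact k
  have fn := qq_fact (j + k)
  have hp := qq_pp (j + k)
  have hc : ((2 * (j + k)).choose (2 * k) : ℝ) * ((2 * k).factorial : ℝ) * ((2 * j).factorial : ℝ)
      = ((2 * (j + k)).factorial : ℝ) := by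
    have := Nat.choose_mul_factorial_mul_factorial (n := 2 * (j + k)) (k := 2 * k) (by omega)
    rw [show 2 * (j + k) - 2 * k = 2 * j by omega] at this
    exact_mod_cast this
  have pj := qq_pos j
  have pk := qq_pos k
  have hj : (0:ℝ) < j.factorial := by exact_mod_cast j.factorial_pos
  have hk : (0:ℝ) < k.factorial := by exact_mod_cast k.factorial_pos
  have hn : (0:ℝ) < (j + k).factorial := by exact_mod_cast (j + k).factorial_pos
  rw [← fj, ← fk, ← fn, hp] at hc
  rw [hp] at h1 h2
  generalize BB (((j + k : ℕ) : ℝ) + -1/2) j = X at *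
  generalize BB (((j + k : ℕ) : ℝ) + -1/2) k = Y at *
  generalize ((2 * (j + k)).choose (2 * k) : ℝ) = Z at *
  have h4 : (0:ℝ) < 4 ^ (j + k) := by positivity
  have : (X * Y) * (qq j * qq k * j.factorial * k.factorial * 4 ^ (j + k))
      = (pp (j + k) * Z) * (qq j * qq k * j.factorial * k.factorial * 4 ^ (j + k)) := by
    have e1 : (X * Y) * (qq j * qq k * j.factorial * k.factorial * 4 ^ (j + k))
      = (Y * qq j * k.factorial) * (X * qq k * j.factorial) * 4 ^ (j + k) := by ring
    rw [e1, h1, h2]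
    rw [pow_add] at hc ⊢
    linear_combination (-pp (j + k)) * hc
  exact mul_right_cancel₀ (by positivity) this

lemma sum_even_odd (f : ℕ → ℝ) (n : ℕ) :
    ∑ i ∈ Finset.range (2 * n + 1), f i
      = ∑ k ∈ Finset.range (n + 1), f (2 * k) + ∑ k ∈ Finset.range n, f (2 * k + 1) := by
  induction n with
  | zero => simp
  | succ n ih =>
    rw [show 2 * (n + 1) + 1 = 2 * n + 1 + 1 + 1 by ring, Finset.sum_range_succ,
      Finset.sum_range_succ, ih, Finset.sum_range_succ _ (n + 1),
      Finset.sum_range_succ (fun k => f (2 * k + 1)) n]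
    rw [show 2 * (n + 1) = 2 * n + 1 + 1 by ring]
    ring

lemma cos_expand (n : ℕ) (θ : ℝ) :
    Real.cos (n * (2 * θ)) = ∑ k ∈ Finset.range (n + 1),
      ((2 * n).choose (2 * k) : ℝ) * (-(Real.sin θ ^ 2)) ^ k * (Real.cos θ ^ 2) ^ (n - k) := by
  have h : Real.cos (n * (2 * θ)) = ∑ i ∈ Finset.range (2 * n + 1),
      (((Real.sin θ : ℂ) * Complex.I) ^ i * (Real.cos θ : ℂ) ^ (2 * n - i)
        * ((2 * n).choose i : ℂ)).re := by
    rw [← Complex.re_sum, ← add_pow, Complex.ofReal_sin, Complex.ofReal_cos, add_comm,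
      Complex.cos_add_sin_mul_I_pow]
    have e : ((2 * n : ℕ) : ℂ) * (θ : ℂ) = ((n * (2 * θ) : ℝ) : ℂ) := by push_cast; ring
    rw [e, ← Complex.ofReal_cos, ← Complex.ofReal_sin, Complex.add_re, Complex.ofReal_re,
      Complex.re_ofReal_mul, Complex.I_re, mul_zero, add_zero]
  rw [h, sum_even_odd, Finset.sum_eq_zero (s := Finset.range n), add_zero]
  · refine Finset.sum_congr rfl fun k hk => ?_
    have e : ((Real.sin θ : ℂ) * Complex.I) ^ (2 * k) * (Real.cos θ : ℂ) ^ (2 * n - 2 * k)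
        * ((2 * n).choose (2 * k) : ℂ)
        = (((2 * n).choose (2 * k) : ℝ) * (-(Real.sin θ ^ 2)) ^ k * (Real.cos θ ^ 2) ^ (n - k) : ℝ) := by
      rw [pow_mul, mul_pow, Complex.I_sq, ← Nat.mul_sub, pow_mul]
      push_cast
      ring
    rw [e, Complex.ofReal_re]
  · intro k hk
    have e : ((Real.sin θ : ℂ) * Complex.I) ^ (2 * k + 1) * (Real.cos θ : ℂ) ^ (2 * n - (2 * k + 1))
        * ((2 * n).choose (2 * k + 1) : ℂ)
        = ((Real.sin θ * (-(Real.sin θ ^ 2)) ^ k * Real.cos θ ^ (2 * n - (2 * k + 1))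
          * ((2 * n).choose (2 * k + 1) : ℝ) : ℝ) : ℂ) * Complex.I := by
      rw [pow_succ, pow_mul, mul_pow, Complex.I_sq]
      push_cast
      ring
    rw [e, Complex.re_ofReal_mul, Complex.I_re, mul_zero]

lemma jac_half (n : ℕ) (θ : ℝ) :
    jacobiP n (-1/2) (-1/2) (Real.cos θ) = pp n * Real.cos (n * θ) := by
  rw [jacobiP_eq _ _ _ _ (by norm_num) (by norm_num), JP_swap]
  have e := cos_expand n (θ / 2)
  rw [show 2 * (θ / 2) = θ by ring] at e
  rw [e, Finset.mul_sum, JP, Finset.Nat.sum_antidiagonal_eq_sum_range_succ_mk]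
  have hc : Real.cos θ = 2 * Real.cos (θ / 2) ^ 2 - 1 := by
    rw [← Real.cos_two_mul]; ring_nf
  have hs := Real.sin_sq_add_cos_sq (θ / 2)
  have h1 : (Real.cos θ - 1) / 2 = -(Real.sin (θ / 2) ^ 2) := by linarith
  have h2 : (Real.cos θ + 1) / 2 = Real.cos (θ / 2) ^ 2 := by linarith
  rw [h1, h2]
  refine Finset.sum_congr rfl fun k hk => ?_
  have hk : k ≤ n := by simpa [Nat.lt_succ_iff] using hk
  obtain ⟨j, rfl⟩ := Nat.exists_eq_add_of_le' hk
  have := BB_half_mul j k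
  simp only [Nat.add_sub_cancel]
  linear_combination ((-(Real.sin (θ / 2) ^ 2)) ^ k * (Real.cos (θ / 2) ^ 2) ^ j) * this

/-- the integrand -/
noncomputable def GG (α β n : ℕ) (θ : ℝ) : ℝ :=
  jacobiP n ((α:ℝ) - 1/2) ((β:ℝ) - 1/2) (Real.cos θ) * Real.sin (θ / 2) ^ (2 * α)
    * Real.cos (θ / 2) ^ (2 * β)

lemma GG_cont (α β n : ℕ) : Continuous (GG α β n) := by
  unfold GG jacobiP
  fun_prop

lemma half_angle (θ : ℝ) : Real.sin (θ / 2) ^ 2 = (1 - Real.cos θ) / 2 ∧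
    Real.cos (θ / 2) ^ 2 = (1 + Real.cos θ) / 2 := by
  have hc : Real.cos θ = 2 * Real.cos (θ / 2) ^ 2 - 1 := by
    rw [← Real.cos_two_mul]; ring_nf
  have hs := Real.sin_sq_add_cos_sq (θ / 2)
  constructor <;> linarith

lemma GG_zero (n : ℕ) (θ : ℝ) : GG 0 0 n θ = pp n * Real.cos (n * θ) := by
  rw [← jac_half]
  simp only [GG, Nat.cast_zero, mul_zero, pow_zero, mul_one]
  norm_num

lemma GG_A (α β n : ℕ) (θ : ℝ) : GG (α + 1) β n θ
    = ((n:ℝ) + ((α:ℝ) + 1/2)) / (2 * ((n:ℝ) + ((α:ℝ) + β + 1) / 2)) * GG α β n θ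
      - ((n:ℝ) + 1) / (2 * ((n:ℝ) + ((α:ℝ) + β + 1) / 2)) * GG α β (n + 1) θ := by
  have ha := α.cast_nonneg (α := ℝ)
  have hb := β.cast_nonneg (α := ℝ)
  have h := jac_A n ((α:ℝ) - 1/2) ((β:ℝ) - 1/2) (Real.cos θ) (by linarith) (by linarith)
  rw [← (half_angle θ).1] at h
  unfold GG
  rw [mul_add 2 α 1, mul_one, pow_add]
  push_cast
  rw [show (α:ℝ) + 1 - 1/2 = α - 1/2 + 1 by ring]
  have hd : 0 < 2 * ((n:ℝ) + ((α:ℝ) + β + 1) / 2) := by positivity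
  rw [div_mul_eq_mul_div, div_mul_eq_mul_div, ← sub_div, eq_div_iff hd.ne']
  linear_combination (Real.sin (θ / 2) ^ (2 * α) * Real.cos (θ / 2) ^ (2 * β)) * h

lemma GG_B (α β n : ℕ) (θ : ℝ) : GG α (β + 1) n θ
    = ((n:ℝ) + ((β:ℝ) + 1/2)) / (2 * ((n:ℝ) + ((α:ℝ) + β + 1) / 2)) * GG α β n θ
      + ((n:ℝ) + 1) / (2 * ((n:ℝ) + ((α:ℝ) + β + 1) / 2)) * GG α β (n + 1) θ := by
  have ha := α.cast_nonneg (α := ℝ)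
  have hb := β.cast_nonneg (α := ℝ)
  have h := jac_B n ((α:ℝ) - 1/2) ((β:ℝ) - 1/2) (Real.cos θ) (by linarith) (by linarith)
  rw [← (half_angle θ).2] at h
  unfold GG
  rw [mul_add 2 β 1, mul_one, pow_add]
  push_cast
  rw [show (β:ℝ) + 1 - 1/2 = β - 1/2 + 1 by ring]
  have hd : 0 < 2 * ((n:ℝ) + ((α:ℝ) + β + 1) / 2) := by positivity
  rw [div_mul_eq_mul_div, div_mul_eq_mul_div, ← add_div, eq_div_iff hd.ne']
  linear_combination (Real.sin (θ / 2) ^ (2 * α) * Real.cos (θ / 2) ^ (2 * β)) * h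

/-- the integral -/
noncomputable def HH (δ : ℝ) (α β n : ℕ) (t : ℝ) : ℝ :=
  ∫ θ in (0:ℝ)..t, (t - θ) ^ δ * GG α β n θ

lemma FJ_eq (δ : ℝ) (α β n : ℕ) (t : ℝ) : FJ n α β δ t = HH δ α β n t := by
  unfold FJ HH GG
  congr 1
  ext θ
  have e1 : Real.sin (θ / 2) ^ (2 * (α:ℝ)) = Real.sin (θ / 2) ^ (2 * α) := by
    rw [← Real.rpow_natCast]; push_cast; rfl
  have e2 : Real.cos (θ / 2) ^ (2 * (β:ℝ)) = Real.cos (θ / 2) ^ (2 * β) := by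
    rw [← Real.rpow_natCast]; push_cast; rfl
  rw [e1, e2]
  ring

lemma HH_int {δ : ℝ} (hδ : 0 ≤ δ) (α β n : ℕ) (t : ℝ) :
    IntervalIntegrable (fun θ : ℝ => (t - θ) ^ δ * GG α β n θ) volume 0 t :=
  (ii_sub_rpow (by linarith)).mul_continuousOn (GG_cont α β n).continuousOn

lemma HH_lin {δ : ℝ} (hδ : 0 ≤ δ) (α β n α' β' : ℕ) (t u v : ℝ)
    (h : ∀ θ, GG α' β' n θ = u * GG α β n θ + v * GG α β (n + 1) θ) :
    HH δ α' β' n t = u * HH δ α β n t + v * HH δ α β (n + 1) t := by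
  unfold HH
  rw [← intervalIntegral.integral_const_mul, ← intervalIntegral.integral_const_mul,
    ← intervalIntegral.integral_add ((HH_int hδ _ _ _ _).const_mul _)
      ((HH_int hδ _ _ _ _).const_mul _)]
  congr 1
  ext θ
  rw [h]
  ring

lemma DD_HH0 {δ : ℝ} (hδ0 : 0 ≤ δ) (α j : ℕ) (hδ : ((α + j : ℕ) : ℝ) + 1 ≤ δ) :
    DD j (-(α:ℝ) - 5/2) (HH δ α 0) := by
  induction α generalizing j with
  | zero =>
    rw [zero_add] at hδ
    have h := (DD_pp j).mul (by norm_num) (by norm_num) (DD_II0 j δ hδ)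
    rw [show (-1/2:ℝ) + -2 = -((0:ℕ):ℝ) - 5/2 by norm_num] at h
    refine h.congr fun n hn t ht => ?_
    unfold II HH
    rw [← intervalIntegral.integral_const_mul]
    congr 1
    ext θ
    rw [GG_zero, add_zero]
    ring
  | succ α ih =>
    have h := ih (j + 1) (by rw [show α + (j + 1) = α + 1 + j by ring]; exact hδ)
    have ha := α.cast_nonneg (α := ℝ)
    have h2 := DD_stepA (by linarith) h ((α:ℝ) + 1/2) 1 (((α:ℝ) + (0:ℕ) + 1) / 2) (by positivity)
    rw [show -(α:ℝ) - 5/2 - 1 = -((α + 1 : ℕ):ℝ) - 5/2 by push_cast; ring] at h2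
    refine h2.congr fun n hn t ht => ?_
    rw [HH_lin hδ0 α 0 n (α + 1) 0 t
      (((n:ℝ) + ((α:ℝ) + 1/2)) / (2 * ((n:ℝ) + ((α:ℝ) + (0:ℕ) + 1) / 2))) (-(((n:ℝ) + 1) / (2 * ((n:ℝ) + ((α:ℝ) + (0:ℕ) + 1) / 2))))
      fun θ => (GG_A α 0 n θ).trans (by ring)]
    ring

lemma DD_HH {δ : ℝ} (hδ0 : 0 ≤ δ) (α β : ℕ) (hδ : (α : ℝ) + 1 ≤ δ) :
    DD 0 (-(α:ℝ) - 5/2) (HH δ α β) := by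
  have ha := α.cast_nonneg (α := ℝ)
  induction β with
  | zero => exact DD_HH0 hδ0 α 0 (by simpa using hδ)
  | succ β ih =>
    have h2 := DD_stepB (by linarith) ih ((β:ℝ) + 1/2) 1 (((α:ℝ) + β + 1) / 2) (by positivity)
    refine h2.congr fun n hn t ht => ?_
    rw [HH_lin hδ0 α β n α (β + 1) t _ _ fun θ => GG_B α β n θ]

theorem FJ_norm_bound (α β : ℕ) (hαβ : 0 < max α β) (δ : ℝ)
    (hδ : (α : ℝ) + 1 ≤ δ) :
    ∃ c : ℝ, 0 < c ∧ ∀ n : ℕ, 1 ≤ n → ∀ t ∈ Set.Ioc (0:ℝ) π,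
      |FJ n (α : ℝ) (β : ℝ) δ t| ≤ c * (n : ℝ) ^ (-(α : ℝ) - 5/2) := by
  have ha := α.cast_nonneg (α := ℝ)
  obtain ⟨C, hC0, hC⟩ := (DD_HH (δ := δ) (by linarith) α β hδ).nonneg
  refine ⟨C + 1, by linarith, fun n hn t ht => ?_⟩
  rw [FJ_eq]
  refine (hC n hn t ht).trans ?_
  gcongr
  linarith
end

section
/- Let β > -1/2 and γ > -1/2 be real, let α be a real number with α > -1/2 and (γ-1)/2 < α < γ, let δ > 0 be real, and fix t ∈ (0, π]. If F_n^{(γ,β),δ}(t) > 0 for all n ∈ ℕ (n ≥ 0), then F_n^{(α,β),δ}(t) > 0 for all n ∈ ℕ (n ≥ 0). -/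
open MeasureTheory Real Set

open Polynomial in
/-- Jacobi polynomial in the variable `y = (1-x)/2`. -/
noncomputable def jac (n : ℕ) (a b : ℝ) : Polynomial ℝ :=
  ∑ k ∈ Finset.range (n + 1),
    C (genBinom ((n : ℝ) + a) ((n : ℝ) - (k : ℝ)) * genBinom ((n : ℝ) + b) (k : ℝ)) *
      ((-X) ^ k * (1 - X) ^ (n - k))

theorem jac_eval (n : ℕ) (a b y : ℝ) : (jac n a b).eval y = jacobiP n a b (1 - 2 * y) := by
  unfold jac jacobiP
  rw [Polynomial.eval_finsetSum]
  refine Finset.sum_congr rfl fun k _ => ?_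
  simp only [Polynomial.eval_mul, Polynomial.eval_C, Polynomial.eval_pow, Polynomial.eval_neg,
    Polynomial.eval_X, Polynomial.eval_sub, Polynomial.eval_one]
  rw [show (1 - 2 * y - 1) / 2 = -y by ring, show (1 - 2 * y + 1) / 2 = 1 - y by ring]
  ring

theorem cf1 (n k : ℕ) (hk : k ≤ n) (a b : ℝ) (ha : -1 < a) (hb : -1 < b) :
    ((n : ℝ) + 1 - k) * (genBinom (((n + 1 : ℕ) : ℝ) + a) (((n + 1 : ℕ) : ℝ) - (k : ℝ)) *
      genBinom (((n + 1 : ℕ) : ℝ) + b) (k : ℝ)) =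
    (k + a + 1) * (genBinom ((n : ℝ) + (a + 1)) ((n : ℝ) - (k : ℝ)) *
      genBinom ((n : ℝ) + (b + 1)) (k : ℝ)) := by
  have hk' : (k : ℝ) ≤ n := by exact_mod_cast hk
  have hk0 : (0 : ℝ) ≤ k := by positivity
  unfold genBinom
  push_cast
  have h1 : Real.Gamma ((n : ℝ) + 1 - k + 1) = (n + 1 - k) * Real.Gamma (n - k + 1) := by
    rw [Real.Gamma_add_one (by linarith)]; ring_nf
  have h2 : Real.Gamma ((k : ℝ) + a + 2) = (k + a + 1) * Real.Gamma (k + a + 1) := by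
    rw [← Real.Gamma_add_one (by linarith)]; ring_nf
  rw [h1, show (n : ℝ) + (a + 1) - (n - k) + 1 = k + a + 2 by ring, h2,
    show (n : ℝ) + 1 + a - (n + 1 - k) + 1 = k + a + 1 by ring,
    show (n : ℝ) + (a + 1) + 1 = n + 1 + a + 1 by ring,
    show (n : ℝ) + (b + 1) = n + 1 + b by ring]
  have := (Real.Gamma_pos_of_pos (show (0 : ℝ) < k + a + 1 by linarith)).ne'
  have := (Real.Gamma_pos_of_pos (show (0 : ℝ) < n - k + 1 by linarith)).ne'
  have h5 : (n : ℝ) + 1 - k ≠ 0 := by linarith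
  have h6 : (k : ℝ) + a + 1 ≠ 0 := by linarith
  have := (Real.Gamma_pos_of_pos (show (0 : ℝ) < k + 1 by linarith)).ne'
  have := (Real.Gamma_pos_of_pos (show (0 : ℝ) < n + 1 + b - k + 1 by linarith)).ne'
  field_simp

theorem cf2 (n k : ℕ) (hk : k ≤ n) (a b : ℝ) (ha : -1 < a) (hb : -1 < b) :
    ((k : ℝ) + 1) * (genBinom (((n + 1 : ℕ) : ℝ) + a) (((n + 1 : ℕ) : ℝ) - ((k + 1 : ℕ) : ℝ)) *
      genBinom (((n + 1 : ℕ) : ℝ) + b) ((k + 1 : ℕ) : ℝ)) =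
    (n - k + b + 1) * (genBinom ((n : ℝ) + (a + 1)) ((n : ℝ) - (k : ℝ)) *
      genBinom ((n : ℝ) + (b + 1)) (k : ℝ)) := by
  have hk' : (k : ℝ) ≤ n := by exact_mod_cast hk
  have hk0 : (0 : ℝ) ≤ k := by positivity
  unfold genBinom
  push_cast
  have h1 : Real.Gamma ((k : ℝ) + 1 + 1) = (k + 1) * Real.Gamma (k + 1) := by
    rw [Real.Gamma_add_one (by linarith)]
  have h2 : Real.Gamma ((n : ℝ) - k + b + 2) = (n - k + b + 1) * Real.Gamma (n - k + b + 1) := by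
    rw [← Real.Gamma_add_one (by linarith)]; ring_nf
  rw [h1, show (n : ℝ) + (b + 1) - k + 1 = n - k + b + 2 by ring, h2,
    show (n : ℝ) + 1 + b - (k + 1) + 1 = n - k + b + 1 by ring,
    show (n : ℝ) + (a + 1) = n + 1 + a by ring,
    show (n : ℝ) + (b + 1) = n + 1 + b by ring,
    show (n : ℝ) + 1 - (k + 1) = n - k by ring]
  have := (Real.Gamma_pos_of_pos (show (0 : ℝ) < n - k + b + 1 by linarith)).ne'
  have := (Real.Gamma_pos_of_pos (show (0 : ℝ) < n - k + 1 by linarith)).ne'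
  have h5 : (k : ℝ) + 1 ≠ 0 := by linarith
  have h6 : (n : ℝ) - k + b + 1 ≠ 0 := by linarith
  have := (Real.Gamma_pos_of_pos (show (0 : ℝ) < k + 1 by linarith)).ne'
  have := (Real.Gamma_pos_of_pos (show (0 : ℝ) < n + 1 + a - (n - k) + 1 by linarith)).ne'
  field_simp

open Polynomial in
theorem jac_deriv (n : ℕ) (a b : ℝ) (ha : -1 < a) (hb : -1 < b) :
    derivative (jac (n + 1) a b) = C (-((n : ℝ) + a + b + 2)) * jac n (a + 1) (b + 1) := by
  have key : derivative (jac (n + 1) a b) =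
      (∑ k ∈ Finset.range (n + 2),
        C ((k : ℝ) * (genBinom (((n + 1 : ℕ) : ℝ) + a) (((n + 1 : ℕ) : ℝ) - (k : ℝ)) *
      genBinom (((n + 1 : ℕ) : ℝ) + b) (k : ℝ))) * (-((-X) ^ (k - 1) * (1 - X) ^ (n + 1 - k)))) +
      ∑ k ∈ Finset.range (n + 2),
        C (((n : ℝ) + 1 - k) * (genBinom (((n + 1 : ℕ) : ℝ) + a) (((n + 1 : ℕ) : ℝ) - (k : ℝ)) *
      genBinom (((n + 1 : ℕ) : ℝ) + b) (k : ℝ))) * (-((-X) ^ k * (1 - X) ^ (n - k))) := by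
    unfold jac
    rw [derivative_sum, ← Finset.sum_add_distrib]
    refine Finset.sum_congr rfl fun k hk => ?_
    have hk : k ≤ n + 1 := by simpa [Nat.lt_succ_iff] using hk
    have e : (((n + 1 - k : ℕ) : ℝ[X])) = C ((n : ℝ) + 1 - k) := by
      rw [Nat.cast_sub hk]; simp
    rw [derivative_C_mul, derivative_mul, derivative_pow, derivative_pow]
    simp only [map_natCast, e, derivative_neg, derivative_X, derivative_sub, derivative_one, C_mul]
    rw [show n + 1 - k - 1 = n - k by omega]
    ring
  rw [key, Finset.sum_range_succ', Finset.sum_range_succ _ (n + 1)]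
  unfold jac
  rw [Finset.mul_sum]
  simp only [Nat.cast_zero, zero_mul, C_0, add_zero, Nat.cast_add, Nat.cast_one, sub_self]
  rw [← Finset.sum_add_distrib]
  refine Finset.sum_congr rfl fun k hk => ?_
  have hk : k ≤ n := by simpa [Nat.lt_succ_iff] using hk
  have h1 := cf1 n k hk a b ha hb
  have h2 := cf2 n k hk a b ha hb
  simp only [Nat.cast_add, Nat.cast_one] at h1 h2
  rw [h1, h2]
  rw [show n + 1 - (k + 1) = n - k by omega, show k + 1 - 1 = k by omega]
  simp only [C_mul, C_add, C_sub, C_neg, C_1]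
  simp only [map_ofNat]
  ring

open Polynomial in
theorem jac_rod (n : ℕ) (a b : ℝ) (ha : -1 < a) (hb : -1 < b) :
    C (a + 1) * (1 - X) * jac n (a + 1) (b + 1) - C (b + 1) * X * jac n (a + 1) (b + 1)
      + X * (1 - X) * derivative (jac n (a + 1) (b + 1)) = C ((n : ℝ) + 1) * jac (n + 1) a b := by
  have key : C ((n : ℝ) + 1) * (jac (n + 1) a b) =
      (∑ k ∈ Finset.range (n + 2),
        C ((k : ℝ) * (genBinom (((n + 1 : ℕ) : ℝ) + a) (((n + 1 : ℕ) : ℝ) - (k : ℝ)) *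
      genBinom (((n + 1 : ℕ) : ℝ) + b) (k : ℝ))) * (((-X) ^ k * (1 - X) ^ (n + 1 - k)))) +
      ∑ k ∈ Finset.range (n + 2),
        C (((n : ℝ) + 1 - k) * (genBinom (((n + 1 : ℕ) : ℝ) + a) (((n + 1 : ℕ) : ℝ) - (k : ℝ)) *
      genBinom (((n + 1 : ℕ) : ℝ) + b) (k : ℝ))) * (((-X) ^ k * (1 - X) ^ (n + 1 - k))) := by
    unfold jac
    rw [Finset.mul_sum, ← Finset.sum_add_distrib]
    refine Finset.sum_congr rfl fun k hk => ?_
    simp only [C_mul, C_add, C_sub]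
    ring
  rw [key, Finset.sum_range_succ', Finset.sum_range_succ _ (n + 1)]
  unfold jac
  rw [derivative_sum, Finset.mul_sum, Finset.mul_sum, Finset.mul_sum]
  simp only [Nat.cast_zero, zero_mul, C_0, add_zero, Nat.cast_add, Nat.cast_one, sub_self]
  rw [← Finset.sum_add_distrib, ← Finset.sum_sub_distrib, ← Finset.sum_add_distrib]
  refine Finset.sum_congr rfl fun k hk => ?_
  have hk : k ≤ n := by simpa [Nat.lt_succ_iff] using hk
  have h1 := cf1 n k hk a b ha hb
  have h2 := cf2 n k hk a b ha hb
  simp only [Nat.cast_add, Nat.cast_one] at h1 h2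
  rw [h1, h2]
  obtain ⟨m, rfl⟩ := Nat.exists_eq_add_of_le hk
  rw [show k + m + 1 - (k + 1) = m by omega, show k + m + 1 - k = m + 1 by omega,
    show k + m - k = m by omega]
  have hx : X * derivative ((-X : ℝ[X]) ^ k) = C (k : ℝ) * (-X) ^ k := by
    rw [derivative_pow]
    rcases k with _ | k
    · simp
    · simp; ring
  have hy : (1 - X) * derivative ((1 - X : ℝ[X]) ^ m) = - C (m : ℝ) * (1 - X) ^ m := by
    rw [derivative_pow]
    rcases m with _ | k
    · simp
    · simp; ring
  rw [derivative_C_mul, derivative_mul]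
  generalize genBinom _ _ * genBinom _ _ = d
  simp only [Nat.cast_add, C_mul, C_add, C_sub, C_1]
  linear_combination C d * (1 - X) ^ (m + 1) * hx + C d * X * (-X) ^ k * hy

theorem wt_integrable (a b : ℝ) (ha : -1 < a) (hb : -1 < b) :
    IntegrableOn (fun y : ℝ => y ^ a * (1 - y) ^ b) (Ioo 0 1) := by
  have h := Complex.betaIntegral_convergent (u := ((a + 1 : ℝ) : ℂ)) (v := ((b + 1 : ℝ) : ℂ))
    (by simp; linarith) (by simp; linarith)
  rw [intervalIntegrable_iff_integrableOn_Ioo_of_le zero_le_one] at h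
  refine IntegrableOn.congr_fun (Integrable.norm h) (fun y hy => ?_) measurableSet_Ioo
  simp only [norm_mul]
  have e : (1 - (y : ℂ)) = ((1 - y : ℝ) : ℂ) := by push_cast; ring
  rw [e, Complex.norm_cpow_eq_rpow_re_of_pos hy.1,
    Complex.norm_cpow_eq_rpow_re_of_pos (sub_pos.2 hy.2)]
  simp

theorem cont_mul_wt_integrable (f : ℝ → ℝ) (hf : Continuous f) (a b : ℝ) (ha : -1 < a)
    (hb : -1 < b) :
    IntegrableOn (fun y : ℝ => f y * (y ^ a * (1 - y) ^ b)) (Ioo 0 1) := by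
  obtain ⟨M, hM⟩ := (isCompact_Icc (a := (0:ℝ)) (b := 1)).exists_bound_of_continuousOn
    hf.continuousOn
  refine Integrable.bdd_mul (c := M) (wt_integrable a b ha hb) hf.aestronglyMeasurable ?_
  filter_upwards [ae_restrict_mem measurableSet_Ioo] with y hy
  exact hM y ⟨hy.1.le, hy.2.le⟩

/-- Weighted integral functional. -/
noncomputable def jL (a b : ℝ) (p : Polynomial ℝ) : ℝ :=
  ∫ y in Ioo (0:ℝ) 1, p.eval y * (y ^ a * (1 - y) ^ b)

theorem jL_int (a b : ℝ) (ha : -1 < a) (hb : -1 < b) (p : Polynomial ℝ) :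
    IntegrableOn (fun y : ℝ => p.eval y * (y ^ a * (1 - y) ^ b)) (Ioo 0 1) :=
  cont_mul_wt_integrable _ p.continuous a b ha hb

theorem jL_add (a b : ℝ) (ha : -1 < a) (hb : -1 < b) (p q : Polynomial ℝ) :
    jL a b (p + q) = jL a b p + jL a b q := by
  unfold jL
  rw [← integral_add (jL_int a b ha hb p) (jL_int a b ha hb q)]
  simp [add_mul]

theorem jL_C_mul (a b : ℝ) (r : ℝ) (p : Polynomial ℝ) :
    jL a b (Polynomial.C r * p) = r * jL a b p := by
  unfold jL
  rw [← integral_const_mul]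
  simp [mul_assoc]

theorem jL_zero (a b : ℝ) : jL a b 0 = 0 := by
  simp [jL]

theorem jL_one_pos (a b : ℝ) (ha : -1 < a) (hb : -1 < b) : 0 < jL a b 1 := by
  unfold jL
  have h := jL_int a b ha hb 1
  rw [setIntegral_pos_iff_support_of_nonneg_ae]
  · have : Ioo (0:ℝ) 1 ⊆
      (Function.support fun y : ℝ => (1 : Polynomial ℝ).eval y * (y ^ a * (1 - y) ^ b)) ∩ Ioo 0 1 := by
      intro y hy
      refine ⟨?_, hy⟩
      have := rpow_pos_of_pos hy.1 a
      have := rpow_pos_of_pos (sub_pos.2 hy.2) b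
      simp only [Polynomial.eval_one, Function.mem_support]
      positivity
    refine lt_of_lt_of_le ?_ (measure_mono this)
    simp
  · filter_upwards [ae_restrict_mem measurableSet_Ioo] with y hy
    have := rpow_pos_of_pos hy.1 a
    have := rpow_pos_of_pos (sub_pos.2 hy.2) b
    simp only [Polynomial.eval_one, Pi.zero_apply]
    positivity
  · exact h

theorem jL_shift2 (a b : ℝ) (p : Polynomial ℝ) :
    jL a (b + 1) p = jL a b ((1 - Polynomial.X) * p) := by
  unfold jL
  refine setIntegral_congr_fun measurableSet_Ioo fun y hy => ?_
  simp only [Polynomial.eval_mul, Polynomial.eval_sub, Polynomial.eval_one, Polynomial.eval_X]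
  rw [rpow_add_one (sub_pos.2 hy.2).ne']
  ring

theorem jL_shift1 (a b : ℝ) (p : Polynomial ℝ) :
    jL (a + 1) b p = jL a b (Polynomial.X * p) := by
  unfold jL
  refine setIntegral_congr_fun measurableSet_Ioo fun y hy => ?_
  simp only [Polynomial.eval_mul, Polynomial.eval_X]
  rw [rpow_add_one hy.1.ne']
  ring

open Polynomial in
theorem jL_rel (a b : ℝ) (ha : -1 < a) (hb : -1 < b) (p : Polynomial ℝ) :
    jL a b (C (a + 1) * (1 - X) * p - C (b + 1) * X * p + X * (1 - X) * derivative p) = 0 := by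
  unfold jL
  rw [← integral_Ioc_eq_integral_Ioo, ← intervalIntegral.integral_of_le zero_le_one]
  rw [intervalIntegral.integral_eq_sub_of_hasDerivAt_of_le zero_le_one
    (f := fun y : ℝ => p.eval y * (y ^ (a + 1) * (1 - y) ^ (b + 1)))]
  · simp [zero_rpow (show a + 1 ≠ 0 by linarith), zero_rpow (show b + 1 ≠ 0 by linarith)]
  · refine Continuous.continuousOn ?_
    refine p.continuous.mul (Continuous.mul ?_ ?_)
    · exact continuous_id.rpow_const fun x => Or.inr (by linarith)
    · exact (continuous_const.sub continuous_id).rpow_const fun x => Or.inr (by linarith)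
  · intro y hy
    have h1 : HasDerivAt (fun y : ℝ => y ^ (a + 1)) _ y :=
      Real.hasDerivAt_rpow_const (p := a + 1) (Or.inl hy.1.ne')
    have h2 := ((hasDerivAt_id y).const_sub 1).rpow_const (p := b + 1)
      (Or.inl (sub_pos.2 hy.2).ne')
    have h3 := (p.hasDerivAt y).mul (h1.mul h2)
    refine h3.congr_deriv ?_
    simp only [eval_add, eval_sub, eval_mul, eval_C, eval_X, eval_one, id, add_sub_cancel_right,
      Pi.mul_apply]
    rw [rpow_add_one (sub_pos.2 hy.2).ne', rpow_add_one hy.1.ne']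
    ring
  · rw [intervalIntegrable_iff_integrableOn_Ioo_of_le zero_le_one]
    exact jL_int a b ha hb _

theorem jac_zero (a b : ℝ) (ha : -1 < a) (hb : -1 < b) : jac 0 a b = 1 := by
  have h1 := (Real.Gamma_pos_of_pos (show (0 : ℝ) < a + 1 by linarith)).ne'
  have h2 := (Real.Gamma_pos_of_pos (show (0 : ℝ) < b + 1 by linarith)).ne'
  simp [jac, genBinom, h1, h2]

open Polynomial in
theorem stepA (k : ℕ) (a b c : ℝ) (ha : -1 < a) (hb : -1 < b) (hc : -1 < c) :
    ((k : ℝ) + 1) * jL a b (jac (k + 1) c b) = (c - a) * jL a (b + 1) (jac k (c + 1) (b + 1)) := by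
  rw [← jL_C_mul, ← jac_rod k c b hc hb, jL_shift2, ← jL_C_mul]
  have h := jL_rel a b ha hb (jac k (c + 1) (b + 1))
  rw [← add_zero (jL a b (C (c - a) * _)), ← h, ← jL_add a b ha hb]
  congr 1
  simp only [C_add, C_sub]
  ring

open Polynomial in
theorem stepB' (n : ℕ) (a b : ℝ) (ha : -1 < a) (hb : -1 < b) (p : ℝ[X]) :
    ((n : ℝ) + 1) * jL a b (p * jac (n + 1) a b) =
      - jL (a + 1) (b + 1) (derivative p * jac n (a + 1) (b + 1)) := by
  have h := jL_rel a b ha hb (p * jac n (a + 1) (b + 1))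
  rw [jL_shift1, jL_shift2, ← jL_C_mul, ← neg_one_mul (jL _ _ _), ← jL_C_mul,
    ← add_zero (jL a b (C (-1) * _)), ← h, ← jL_add a b ha hb,
    show C ((n : ℝ) + 1) * (p * jac (n + 1) a b) = p * (C ((n : ℝ) + 1) * jac (n + 1) a b) by ring,
    ← jac_rod n a b ha hb, derivative_mul]
  congr 1
  simp only [C_neg, C_1]
  ring

theorem stepB (n k : ℕ) (a b c : ℝ) (ha : -1 < a) (hb : -1 < b) (hc : -1 < c) :
    ((n : ℝ) + 1) * jL a b (jac (k + 1) c b * jac (n + 1) a b) =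
      ((k : ℝ) + c + b + 2) *
        jL (a + 1) (b + 1) (jac k (c + 1) (b + 1) * jac n (a + 1) (b + 1)) := by
  rw [stepB' n a b ha hb, jac_deriv k c b hc hb, mul_assoc, jL_C_mul]
  ring

theorem stepB0 (n : ℕ) (a b c : ℝ) (ha : -1 < a) (hb : -1 < b) (hc : -1 < c) :
    jL a b (jac 0 c b * jac (n + 1) a b) = 0 := by
  have h := stepB' n a b ha hb (jac 0 c b)
  rw [jac_zero c b hc hb] at h ⊢
  rw [Polynomial.derivative_one, zero_mul, jL_zero, neg_zero] at h
  have : (n : ℝ) + 1 ≠ 0 := by positivity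
  exact (mul_eq_zero.1 h).resolve_left this

theorem posA (k : ℕ) : ∀ (a b c : ℝ), -1 < a → -1 < b → a ≤ c → 0 ≤ jL a b (jac k c b) := by
  induction k with
  | zero => intro a b c ha hb hc; rw [jac_zero c b (by linarith) hb]; exact (jL_one_pos a b ha hb).le
  | succ k ih =>
    intro a b c ha hb hc
    have h := stepA k a b c ha hb (by linarith)
    have h2 := ih a (b + 1) (c + 1) ha (by linarith) (by linarith)
    have : (0:ℝ) < (k : ℝ) + 1 := by positivity
    refine (mul_nonneg_iff_of_pos_left this).1 ?_
    rw [h]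
    exact mul_nonneg (by linarith) h2

theorem posB (n : ℕ) : ∀ (k : ℕ) (a b c : ℝ), -1 < a → -1 < b → a ≤ c →
    0 ≤ jL a b (jac k c b * jac n a b) := by
  induction n with
  | zero =>
    intro k a b c ha hb hc
    rw [jac_zero a b ha hb, mul_one]
    exact posA k a b c ha hb hc
  | succ n ih =>
    intro k a b c ha hb hc
    rcases k with _ | k
    · exact (stepB0 n a b c ha hb (by linarith)).ge
    · have h := stepB n k a b c ha hb (by linarith)
      have h2 := ih k (a + 1) (b + 1) (c + 1) (by linarith) (by linarith) (by linarith)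
      have : (0:ℝ) < (n : ℝ) + 1 := by positivity
      have hk : (0:ℝ) ≤ k := by positivity
      refine (mul_nonneg_iff_of_pos_left this).1 ?_
      rw [h]
      exact mul_nonneg (by linarith) h2

theorem posD (n : ℕ) : ∀ (a b c : ℝ), -1 < a → -1 < b → a ≤ c →
    0 < jL a b (jac n c b * jac n a b) := by
  induction n with
  | zero =>
    intro a b c ha hb hc
    rw [jac_zero a b ha hb, mul_one, jac_zero c b (by linarith) hb]
    exact jL_one_pos a b ha hb
  | succ n ih =>
    intro a b c ha hb hc
    have h := stepB n n a b c ha hb (by linarith)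
    have h2 := ih (a + 1) (b + 1) (c + 1) (by linarith) (by linarith) (by linarith)
    have : (0:ℝ) < (n : ℝ) + 1 := by positivity
    have hk : (0:ℝ) ≤ n := by positivity
    refine (mul_pos_iff_of_pos_left this).1 ?_
    rw [h]
    exact mul_pos (by linarith) h2

theorem orth_lt (k : ℕ) : ∀ (n : ℕ) (a b : ℝ), -1 < a → -1 < b → k < n →
    jL a b (jac k a b * jac n a b) = 0 := by
  induction k with
  | zero =>
    intro n a b ha hb hn
    obtain ⟨n, rfl⟩ := Nat.exists_eq_succ_of_ne_zero hn.ne'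
    exact stepB0 n a b a ha hb ha
  | succ k ih =>
    intro n a b ha hb hn
    obtain ⟨n, rfl⟩ := Nat.exists_eq_succ_of_ne_zero (show n ≠ 0 by omega)
    have h := stepB n k a b a ha hb ha
    rw [ih n (a + 1) (b + 1) (by linarith) (by linarith) (by omega), mul_zero] at h
    have : (n : ℝ) + 1 ≠ 0 := by positivity
    exact (mul_eq_zero.1 h).resolve_left this

theorem jac_degree (n : ℕ) : ∀ (a b : ℝ), -1 < a → -1 < b → (jac n a b).degree = n := by
  induction n with
  | zero => intro a b ha hb; rw [jac_zero a b ha hb]; simp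
  | succ n ih =>
    intro a b ha hb
    have h := jac_deriv n a b ha hb
    have hn : (0:ℝ) ≤ n := by positivity
    have hd : (Polynomial.derivative (jac (n + 1) a b)).degree = n := by
      rw [h, Polynomial.degree_C_mul (by linarith), ih _ _ (by linarith) (by linarith)]
    have h0 : (jac (n + 1) a b).natDegree ≠ 0 := by
      intro h0
      rw [Polynomial.derivative_of_natDegree_zero h0] at hd
      simp at hd
    have h1 := Polynomial.degree_derivative h0
    rw [hd] at h1
    have h2 : n = (jac (n + 1) a b).natDegree - 1 := by exact_mod_cast h1
    rw [Polynomial.degree_eq_natDegree (by intro h; simp [h] at h0)]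
    exact_mod_cast (by omega : (jac (n + 1) a b).natDegree = n + 1)

theorem jac_span (a b : ℝ) (ha : -1 < a) (hb : -1 < b) :
    Submodule.span ℝ (Set.range fun n => jac n a b) = ⊤ := by
  let S : Polynomial.Sequence ℝ := ⟨fun n => jac n a b, fun n => jac_degree n a b ha hb⟩
  exact S.span fun i => (Polynomial.leadingCoeff_ne_zero.2 (S.ne_zero i)).isUnit

theorem hilb {E : Type*} [NormedAddCommGroup E] [InnerProductSpace ℝ E] [CompleteSpace E]
    (v : ℕ → E) (horth : ∀ i j, i ≠ j → inner ℝ (v i) (v j) = 0) (hne : ∀ i, v i ≠ 0)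
    (hd : ⊤ ≤ (Submodule.span ℝ (Set.range v)).topologicalClosure) (g f : E)
    (hg : ∀ k, 0 < inner ℝ g (v k)) (hf : ∀ k, 0 ≤ inner ℝ (v k) f) (n : ℕ)
    (hfn : 0 < inner ℝ (v n) f) : 0 < inner ℝ g f := by
  let e : ℕ → E := fun i => (‖v i‖⁻¹ : ℝ) • v i
  have hnv : ∀ i, 0 < ‖v i‖⁻¹ := fun i => inv_pos.2 (norm_pos_iff.2 (hne i))
  have he : Orthonormal ℝ e := by
    constructor
    · intro i
      simp only [e, norm_smul, norm_inv, norm_norm]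
      exact inv_mul_cancel₀ (norm_ne_zero_iff.2 (hne i))
    · intro i j hij
      simp only [e, inner_smul_left, inner_smul_right, horth i j hij, mul_zero]
  have hsp : ⊤ ≤ (Submodule.span ℝ (Set.range e)).topologicalClosure := by
    refine hd.trans (Submodule.topologicalClosure_mono ?_)
    rw [Submodule.span_le]
    rintro _ ⟨i, rfl⟩
    have : v i = ‖v i‖ • e i := by
      simp only [e, smul_smul]
      rw [mul_inv_cancel₀ (norm_ne_zero_iff.2 (hne i)), one_smul]
    rw [this]
    exact Submodule.smul_mem _ _ (Submodule.subset_span ⟨i, rfl⟩)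
  have hs := (HilbertBasis.mk he hsp).hasSum_inner_mul_inner g f
  simp only [HilbertBasis.coe_mk, e, inner_smul_left, inner_smul_right, conj_trivial] at hs
  have hnn : ∀ k, 0 ≤ ‖v k‖⁻¹ * inner ℝ g (v k) * (‖v k‖⁻¹ * inner ℝ (v k) f) := fun k =>
    mul_nonneg (mul_nonneg (hnv k).le (hg k).le) (mul_nonneg (hnv k).le (hf k))
  have h1 := le_hasSum hs n fun k _ => hnn k
  refine lt_of_lt_of_le ?_ h1
  exact mul_pos (mul_pos (hnv n) (hg n)) (mul_pos (hnv n) hfn)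

/-- The Jacobi measure. -/
noncomputable def jmu (c b : ℝ) : Measure ℝ :=
  (volume.restrict (Ioo (0:ℝ) 1)).withDensity (fun y => ENNReal.ofReal (y ^ c * (1 - y) ^ b))

theorem wt_meas (c b : ℝ) : Measurable (fun y : ℝ => y ^ c * (1 - y) ^ b) := by
  fun_prop

theorem jmu_integral (c b : ℝ) (h : ℝ → ℝ) :
    ∫ y, h y ∂(jmu c b) = ∫ y in Ioo (0:ℝ) 1, h y * (y ^ c * (1 - y) ^ b) := by
  unfold jmu
  rw [integral_withDensity_eq_integral_toReal_smul (wt_meas c b).ennreal_ofReal (by simp)]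
  refine setIntegral_congr_fun measurableSet_Ioo fun y hy => ?_
  have := rpow_pos_of_pos hy.1 c
  have := rpow_pos_of_pos (sub_pos.2 hy.2) b
  simp only [smul_eq_mul]
  rw [ENNReal.toReal_ofReal (by positivity)]
  ring

theorem jmu_integrable (c b : ℝ) (h : ℝ → ℝ)
    (hh : IntegrableOn (fun y => h y * (y ^ c * (1 - y) ^ b)) (Ioo 0 1)) :
    Integrable h (jmu c b) := by
  unfold jmu
  rw [integrable_withDensity_iff (wt_meas c b).ennreal_ofReal (by simp)]
  refine IntegrableOn.congr_fun hh (fun y hy => ?_) measurableSet_Ioo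
  have := rpow_pos_of_pos hy.1 c
  have := rpow_pos_of_pos (sub_pos.2 hy.2) b
  rw [ENNReal.toReal_ofReal (by positivity)]

theorem jmu_ae (c b : ℝ) : ∀ᵐ y ∂(jmu c b), y ∈ Ioo (0:ℝ) 1 :=
  (withDensity_absolutelyContinuous _ _).ae_le (ae_restrict_mem measurableSet_Ioo)

theorem jmu_finite (c b : ℝ) (hc : -1 < c) (hb : -1 < b) : IsFiniteMeasure (jmu c b) := by
  have h := jmu_integrable c b (fun _ => 1) (by simpa using wt_integrable c b hc hb)
  rw [integrable_const_iff] at h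
  simpa using h

theorem jmu_memLp_cont (c b : ℝ) (hc : -1 < c) (hb : -1 < b) (f : ℝ → ℝ) (hf : Continuous f) :
    MemLp f 2 (jmu c b) := by
  rw [memLp_two_iff_integrable_sq hf.aestronglyMeasurable]
  exact jmu_integrable c b _ (cont_mul_wt_integrable _ (hf.pow 2) c b hc hb)

theorem toLp_inner {μ : Measure ℝ} (f g : ℝ → ℝ) (hf : MemLp f 2 μ) (hg : MemLp g 2 μ) :
    inner ℝ (hf.toLp f) (hg.toLp g) = ∫ y, f y * g y ∂μ := by
  rw [L2.inner_def]
  refine integral_congr_ae ?_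
  filter_upwards [hf.coeFn_toLp, hg.coeFn_toLp] with y h1 h2
  rw [h1, h2]
  simp [mul_comm]

/-- Polynomials as elements of the weighted `L²` space. -/
noncomputable def polyT (c b : ℝ) (hc : -1 < c) (hb : -1 < b) :
    Polynomial ℝ →ₗ[ℝ] Lp ℝ 2 (jmu c b) where
  toFun p := (jmu_memLp_cont c b hc hb (fun y => p.eval y) p.continuous).toLp _
  map_add' p q := by
    rw [← MemLp.toLp_add]
    congr 1
    ext y
    simp
  map_smul' r p := by
    simp only [RingHom.id_apply]
    rw [← MemLp.toLp_const_smul]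
    congr 1
    ext y
    simp

theorem polyT_dense (c b : ℝ) (hc : -1 < c) (hb : -1 < b) :
    ⊤ ≤ (Submodule.span ℝ (Set.range fun n => polyT c b hc hb (jac n c b))).topologicalClosure := by
  have e : Submodule.span ℝ (Set.range fun n => polyT c b hc hb (jac n c b)) =
      LinearMap.range (polyT c b hc hb) := by
    rw [LinearMap.range_eq_map, ← jac_span c b hc hb, Submodule.map_span, ← Set.range_comp]
    rfl
  rw [e]
  have := jmu_finite c b hc hb
  intro u _
  have hD := BoundedContinuousFunction.toLp_denseRange (p := 2) (μ := jmu c b) (𝕜 := ℝ) (E := ℝ)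
    (by simp)
  refine hD.induction_on (p := fun u =>
    u ∈ (LinearMap.range (polyT c b hc hb)).topologicalClosure) u
    (Submodule.isClosed_topologicalClosure _) ?_
  intro g
  rw [← SetLike.mem_coe, Submodule.topologicalClosure_coe, Metric.mem_closure_iff]
  intro ε hε
  set M : ℝ := (((measureUnivNNReal (jmu c b)) ^ ((2 : ENNReal).toReal)⁻¹ : NNReal) : ℝ) with hM
  have hM0 : 0 ≤ M := NNReal.coe_nonneg _
  obtain ⟨p, hp⟩ := exists_polynomial_near_of_continuousOn 0 1 g g.continuous.continuousOn
    (ε / (M + 1)) (by positivity)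
  refine ⟨polyT c b hc hb p, ⟨p, rfl⟩, ?_⟩
  rw [dist_eq_norm]
  have := Lp.norm_le_of_ae_bound (μ := jmu c b) (p := 2)
    (f := BoundedContinuousFunction.toLp 2 (jmu c b) ℝ g - polyT c b hc hb p)
    (C := ε / (M + 1)) (by positivity) ?_
  · refine this.trans_lt ?_
    have : M * (ε / (M + 1)) < ε := by
      rw [mul_div_assoc', div_lt_iff₀ (by positivity)]
      nlinarith
    simpa [hM] using this
  · filter_upwards [Lp.coeFn_sub (BoundedContinuousFunction.toLp 2 (jmu c b) ℝ g)
      (polyT c b hc hb p), BoundedContinuousFunction.coeFn_toLp (p := 2) (𝕜 := ℝ) (jmu c b) g,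
      (jmu_memLp_cont c b hc hb (fun y => p.eval y) p.continuous).coeFn_toLp, jmu_ae c b]
      with y h1 h2 h3 h4
    rw [h1, Pi.sub_apply, h2]
    change ‖g y - ((jmu_memLp_cont c b hc hb (fun y => p.eval y) p.continuous).toLp _ : ℝ → ℝ) y‖ ≤ _
    rw [h3, norm_sub_rev]
    exact (hp y ⟨h4.1.le, h4.2.le⟩).le

theorem core (a b c : ℝ) (ha : -1 < a) (hb : -1 < b) (hac : a ≤ c) (h2 : -1 < 2 * a - c)
    (g : ℝ → ℝ) (hg : Continuous g)
    (hpos : ∀ k, 0 < ∫ y in Ioo (0:ℝ) 1, g y * (jac k c b).eval y * (y ^ c * (1 - y) ^ b)) (n : ℕ) :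
    0 < ∫ y in Ioo (0:ℝ) 1, g y * (jac n a b).eval y * (y ^ a * (1 - y) ^ b) := by
  have hc : -1 < c := by linarith
  have key : ∀ y ∈ Ioo (0:ℝ) 1, y ^ (a - c) * (y ^ c * (1 - y) ^ b) = y ^ a * (1 - y) ^ b := by
    intro y hy
    rw [← mul_assoc, ← rpow_add hy.1]
    simp
  have hfm : MemLp (fun y => y ^ (a - c) * (jac n a b).eval y) 2 (jmu c b) := by
    rw [memLp_two_iff_integrable_sq]
    · refine jmu_integrable c b _ ?_
      refine IntegrableOn.congr_fun (jL_int (2 * a - c) b h2 hb ((jac n a b) ^ 2))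
        (fun y hy => ?_) measurableSet_Ioo
      simp only [Polynomial.eval_pow]
      rw [show 2 * a - c = (a - c) + a by ring, rpow_add hy.1]
      linear_combination (y ^ (a - c)) * (jac n a b).eval y ^ 2 * (-(key y hy))
    · refine Measurable.aestronglyMeasurable ?_
      exact (by fun_prop : Measurable fun y : ℝ => y ^ (a - c)).mul
        (Polynomial.continuous _).measurable
  have hgm := jmu_memLp_cont c b hc hb g hg
  have hv : ∀ p : Polynomial ℝ, polyT c b hc hb p =
    (jmu_memLp_cont c b hc hb (fun y => p.eval y) p.continuous).toLp _ := fun p => rfl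
  have hvf : ∀ k, inner ℝ (polyT c b hc hb (jac k c b)) (hfm.toLp _) =
      jL a b (jac k c b * jac n a b) := by
    intro k
    rw [hv, toLp_inner, jmu_integral]
    refine setIntegral_congr_fun measurableSet_Ioo fun y hy => ?_
    simp only [Polynomial.eval_mul]
    linear_combination (jac k c b).eval y * (jac n a b).eval y * key y hy
  have hvv : ∀ k j, inner ℝ (polyT c b hc hb (jac k c b)) (polyT c b hc hb (jac j c b)) =
      jL c b (jac k c b * jac j c b) := by
    intro k j
    rw [hv, hv, toLp_inner, jmu_integral]
    simp [jL]
  have := hilb (fun k => polyT c b hc hb (jac k c b)) ?_ ?_ (polyT_dense c b hc hb)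
    (hgm.toLp _) (hfm.toLp _) ?_ ?_ n ?_
  · rw [toLp_inner, jmu_integral] at this
    refine this.trans_eq (setIntegral_congr_fun measurableSet_Ioo fun y hy => ?_)
    linear_combination g y * (jac n a b).eval y * key y hy
  · intro i j hij
    simp only [hvv]
    rcases lt_or_gt_of_ne hij with h | h
    · exact orth_lt i j c b hc hb h
    · rw [mul_comm]; exact orth_lt j i c b hc hb h
  · intro i h0
    have h1 := hvv i i
    rw [h0, inner_zero_left] at h1
    exact (posD i c b c hc hb le_rfl).ne h1
  · intro k
    simp only [hv]
    rw [toLp_inner, jmu_integral]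
    exact hpos k
  · intro k
    simp only [hvf]
    exact posB n k a b c ha hb hac
  · simp only [hvf]
    exact posD n a b c ha hb hac

/-- The truncated power as a function of `y = (1 - cos θ)/2`. -/
noncomputable def gfun (δ t y : ℝ) : ℝ := (max (t - arccos (1 - 2 * y)) 0) ^ δ

theorem gfun_cont (δ t : ℝ) (hδ : 0 < δ) : Continuous (gfun δ t) := by
  unfold gfun
  refine Continuous.rpow_const ?_ fun x => Or.inr hδ.le
  exact (continuous_const.sub (continuous_arccos.comp (by fun_prop))).max continuous_const

theorem phi_image : (fun θ : ℝ => (1 - cos θ) / 2) '' Ioo 0 π = Ioo 0 1 := by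
  ext y
  constructor
  · rintro ⟨θ, hθ, rfl⟩
    have h1 : cos θ < 1 := by
      have := strictAntiOn_cos (left_mem_Icc.2 pi_pos.le) ⟨hθ.1.le, hθ.2.le⟩ hθ.1
      simpa using this
    have h2 : -1 < cos θ := by
      have := strictAntiOn_cos ⟨hθ.1.le, hθ.2.le⟩ (right_mem_Icc.2 pi_pos.le) hθ.2
      simpa using this
    constructor <;> simp only <;> linarith
  · intro hy
    refine ⟨arccos (1 - 2 * y), ⟨arccos_pos.2 (by linarith [hy.1]), ?_⟩, ?_⟩
    · refine lt_of_le_of_ne (arccos_le_pi _) fun h => ?_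
      rw [arccos_eq_pi] at h
      linarith [hy.2]
    · simp only
      rw [cos_arccos (by linarith [hy.2]) (by linarith [hy.1])]
      ring

theorem FJ_eq_s13 (n : ℕ) (α β δ t : ℝ) (hδ : 0 < δ) (ht : t ∈ Set.Ioc (0:ℝ) π) :
    FJ n α β δ t = ∫ y in Ioo (0:ℝ) 1, gfun δ t y * (jac n (α - 1/2) (β - 1/2)).eval y *
      (y ^ (α - 1/2) * (1 - y) ^ (β - 1/2)) := by
  rw [← phi_image, integral_image_eq_integral_abs_deriv_smul (f' := fun θ => sin θ / 2)
    measurableSet_Ioo]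
  · unfold FJ
    rw [intervalIntegral.integral_of_le ht.1.le, integral_Ioc_eq_integral_Ioo]
    refine Eq.trans ?_ (setIntegral_eq_of_subset_of_forall_sdiff_eq_zero (s := Ioo 0 t)
      (t := Ioo 0 π) measurableSet_Ioo (Ioo_subset_Ioo le_rfl ht.2) ?_).symm
    · refine setIntegral_congr_fun measurableSet_Ioo fun θ hθ => ?_
      have hθπ : θ < π := hθ.2.trans_le ht.2
      have hs : 0 < sin (θ / 2) := sin_pos_of_pos_of_lt_pi (by linarith [hθ.1]) (by linarith [hθ.1, pi_pos])
      have hc : 0 < cos (θ / 2) := cos_pos_of_mem_Ioo ⟨by linarith [hθ.1, pi_pos], by linarith⟩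
      have e1 : (1 - cos θ) / 2 = sin (θ / 2) ^ 2 := by
        rw [sin_sq_eq_half_sub]; ring_nf
      have e2 : 1 - sin (θ / 2) ^ 2 = cos (θ / 2) ^ 2 := by
        rw [← sin_sq_add_cos_sq (θ / 2)]; ring
      have e3 : sin θ / 2 = sin (θ / 2) * cos (θ / 2) := by
        have := sin_two_mul (θ / 2)
        rw [show 2 * (θ / 2) = θ by ring] at this
        rw [this]; ring
      have e4 : gfun δ t ((1 - cos θ) / 2) = (t - θ) ^ δ := by
        unfold gfun
        rw [show 1 - 2 * ((1 - cos θ) / 2) = cos θ by ring, arccos_cos hθ.1.le hθπ.le,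
          max_eq_left (by linarith [hθ.2])]
      have e5 : (jac n (α - 1/2) (β - 1/2)).eval ((1 - cos θ) / 2) =
          jacobiP n (α - 1/2) (β - 1/2) (cos θ) := by
        rw [jac_eval]; congr 1; ring
      have e6 : sin (θ / 2) ^ (2 * α) = sin (θ / 2) * (sin (θ / 2) ^ 2) ^ (α - 1/2) := by
        rw [← rpow_natCast, ← rpow_mul hs.le, mul_comm (sin (θ / 2)), ← rpow_add_one hs.ne']
        congr 1; push_cast; ring
      have e7 : cos (θ / 2) ^ (2 * β) = cos (θ / 2) * (cos (θ / 2) ^ 2) ^ (β - 1/2) := by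
        rw [← rpow_natCast, ← rpow_mul hc.le, mul_comm (cos (θ / 2)), ← rpow_add_one hc.ne']
        congr 1; push_cast; ring
      simp only [smul_eq_mul]
      rw [e4, e5, e1, e2, e3, e6, e7, abs_of_pos (mul_pos hs hc)]
      ring
    · intro θ hθ
      have h1 : t ≤ θ := by
        by_contra h
        exact hθ.2 ⟨hθ.1.1, not_le.1 h⟩
      have : gfun δ t ((1 - cos θ) / 2) = 0 := by
        unfold gfun
        rw [show 1 - 2 * ((1 - cos θ) / 2) = cos θ by ring, arccos_cos hθ.1.1.le hθ.1.2.le,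
          max_eq_right (by linarith), zero_rpow hδ.ne']
      simp [this]
  · intro θ _
    have := ((hasDerivAt_cos θ).const_sub 1).div_const 2
    simpa using this.hasDerivWithinAt
  · intro x hx y hy hxy
    refine injOn_cos ⟨hx.1.le, hx.2.le⟩ ⟨hy.1.le, hy.2.le⟩ ?_
    simp only at hxy
    linarith

theorem step (β γ α : ℝ) (hβ : -1/2 < β) (hα : -1/2 < α) (h : α ≤ γ) (h2 : γ - 1/2 < 2 * α)
    (δ : ℝ) (hδ : 0 < δ) (t : ℝ) (ht : t ∈ Set.Ioc (0:ℝ) π)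
    (hpos : ∀ n : ℕ, 0 < FJ n γ β δ t) (n : ℕ) : 0 < FJ n α β δ t := by
  rw [FJ_eq_s13 n α β δ t hδ ht]
  refine core (α - 1/2) (β - 1/2) (γ - 1/2) (by linarith) (by linarith) (by linarith)
    (by linarith) (gfun δ t) (gfun_cont δ t hδ) (fun k => ?_) n
  rw [← FJ_eq_s13 k γ β δ t hδ ht]
  exact hpos k

theorem iter (β α : ℝ) (hβ : -1/2 < β) (hα : -1/2 < α) (δ : ℝ) (hδ : 0 < δ) (t : ℝ)
    (ht : t ∈ Set.Ioc (0:ℝ) π) (m : ℕ) : ∀ γ : ℝ, α ≤ γ →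
    γ + 1/2 ≤ (3/2 : ℝ) ^ m * (α + 1/2) → (∀ n : ℕ, 0 < FJ n γ β δ t) →
    ∀ n : ℕ, 0 < FJ n α β δ t := by
  induction m with
  | zero =>
    intro γ h1 h2 hp
    have : γ = α := by rw [pow_zero] at h2; linarith
    rwa [this] at hp
  | succ m ih =>
    intro γ h1 h2 hp
    have hm : (1:ℝ) ≤ (3/2 : ℝ) ^ m := one_le_pow₀ (by norm_num)
    have l1 := le_max_left α ((γ + 1/2) * (2/3) - 1/2)
    have l2 := le_max_right α ((γ + 1/2) * (2/3) - 1/2)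
    refine ih (max α ((γ + 1/2) * (2/3) - 1/2)) l1 ?_
      (step β γ _ hβ (by linarith) (max_le h1 (by linarith)) (by linarith) δ hδ t ht hp)
    have : max α ((γ + 1/2) * (2/3) - 1/2) ≤ (3/2 : ℝ) ^ m * (α + 1/2) - 1/2 := by
      refine max_le ?_ ?_
      · nlinarith
      · rw [pow_succ] at h2
        linarith
    linarith

theorem FJ_pos_transfer_alpha (β γ α : ℝ) (hβ : -1/2 < β) (hγ : -1/2 < γ)
    (hα : -1/2 < α) (hαγ : (γ - 1) / 2 < α) (hαγ' : α < γ) (δ : ℝ) (hδ : 0 < δ)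
    (t : ℝ) (ht : t ∈ Set.Ioc (0:ℝ) π)
    (hpos : ∀ n : ℕ, 0 < FJ n γ β δ t) :
    ∀ n : ℕ, 0 < FJ n α β δ t := by
  obtain ⟨m, hm⟩ := pow_unbounded_of_one_lt ((γ + 1/2) / (α + 1/2)) (by norm_num : (1:ℝ) < 3/2)
  refine iter β α hβ hα δ hδ t ht m γ hαγ'.le ?_ hpos
  rw [div_lt_iff₀ (by linarith)] at hm
  exact hm.le
end
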